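/- Let L > 0, T > 0 and fix feedback gains α, β with 0 < |α| < 1 and β > 0. There exists a constant C > 0 such that every classical solution u of the closed-loop linear KP-II system on [0,L]² × [0,T] satisfies the observability inequality ∫_Ω u(x,y,0)² dx dy ≤ C [ ∫₀^T ∫₀^L u_x(0,y,t)² dy dt + ∫₀^T ∫₀^L u(x,L,t)² dx dt + ∫₀^T ∫₀^L ((∂ₓ⁻¹ u_y)(0,y,t))² dy dt ]. -/

import Mathlib

open MeasureTheory Real

noncomputable section

/-- Partial derivative in `x` of `u(x,y,t)`. -/
def pdx (u : ℝ → ℝ → ℝ → ℝ) (x y t : ℝ) : ℝ := deriv (fun x' => u x' y t) x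

/-- Third partial derivative in `x` of `u(x,y,t)`. -/
def pdx3 (u : ℝ → ℝ → ℝ → ℝ) (x y t : ℝ) : ℝ := iteratedDeriv 3 (fun x' => u x' y t) x

/-- Partial derivative in `y` of `u(x,y,t)`. -/
def pdy (u : ℝ → ℝ → ℝ → ℝ) (x y t : ℝ) : ℝ := deriv (fun y' => u x y' t) y

/-- Second partial derivative in `y` of `u(x,y,t)`. -/
def pdy2 (u : ℝ → ℝ → ℝ → ℝ) (x y t : ℝ) : ℝ := iteratedDeriv 2 (fun y' => u x y' t) y

/-- Partial derivative in `t` of `u(x,y,t)`. -/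
def pdt (u : ℝ → ℝ → ℝ → ℝ) (x y t : ℝ) : ℝ := deriv (fun t' => u x y t') t

/-- The nonlocal operator `(∂ₓ⁻¹ w)(x,y) = -∫ₓ^L w(s,y) ds`. -/
def pxInv (L : ℝ) (w : ℝ → ℝ → ℝ) (x y : ℝ) : ℝ := -(∫ s in x..L, w s y)

/-- A classical solution of the closed-loop linear KP-II system on `[0,L]² × [0,T]`:
`u` is `C³`, satisfies `u_t + u_x + u_xxx + ∂ₓ⁻¹ u_yy = 0` on `Ω × (0,T)` and the
boundary feedback conditions for all `t ∈ [0,T]`. -/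
def IsKPSolution (L T α β : ℝ) (u : ℝ → ℝ → ℝ → ℝ) : Prop :=
  ContDiff ℝ 3 (fun p : ℝ × ℝ × ℝ => u p.1 p.2.1 p.2.2) ∧
  (∀ x ∈ Set.Ioo (0:ℝ) L, ∀ y ∈ Set.Ioo (0:ℝ) L, ∀ t ∈ Set.Ioo (0:ℝ) T,
      pdt u x y t + pdx u x y t + pdx3 u x y t
        + pxInv L (fun s y' => pdy2 u s y' t) x y = 0) ∧
  (∀ y ∈ Set.Icc (0:ℝ) L, ∀ t ∈ Set.Icc (0:ℝ) T,
      u 0 y t = 0 ∧ u L y t = 0 ∧ pdx u L y t = α * pdx u 0 y t) ∧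
  (∀ x ∈ Set.Icc (0:ℝ) L, ∀ t ∈ Set.Icc (0:ℝ) T,
      pdy u x L t = β * pdx u x L t ∧ pdy u x 0 t = 0)

/-- The energy `E(t) = ½ ∫_Ω u(x,y,t)² dx dy`. -/
def energy (L : ℝ) (u : ℝ → ℝ → ℝ → ℝ) (t : ℝ) : ℝ :=
  (1/2) * ∫ x in (0:ℝ)..L, ∫ y in (0:ℝ)..L, (u x y t)^2

/-! ### Density of high frequency cosines -/

/-- The function `s ↦ cos (k s)` on `[0,L]` as a continuous map. -/
def cosMap (L k : ℝ) : C(Set.Icc (0:ℝ) L, ℝ) := ⟨fun s => Real.cos (k * s), by fun_prop⟩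

/-- The function `s ↦ i s` on `[0,L]` as a continuous map. -/
def imMap (L : ℝ) : C(Set.Icc (0:ℝ) L, ℂ) := ⟨fun s => Complex.I * ((s : ℝ) : ℂ), by fun_prop⟩

lemma cosMap_eq (L k : ℝ) : cosMap L k =
    (Complex.reCLM.compLeftContinuous ℝ (Set.Icc (0:ℝ) L)) (NormedSpace.exp (k • imMap L)) := by
  ext s
  have h : (NormedSpace.exp (k • imMap L)) s = Complex.exp ((k • imMap L) s) := by
    have := NormedSpace.map_exp (ContinuousMap.evalAlgHom ℝ ℂ s) 
      (show Continuous fun f : C(Set.Icc (0:ℝ) L, ℂ) => f s by fun_prop) (k • imMap L)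
    rw [Complex.exp_eq_exp_ℂ]
    exact this
  simp only [ContinuousLinearMap.compLeftContinuous_apply]
  change Real.cos (k * s) = ((NormedSpace.exp (k • imMap L)) s).re
  rw [h]
  change Real.cos (k * s) = (Complex.exp (k • (Complex.I * ((s : ℝ) : ℂ)))).re
  rw [Complex.real_smul, Complex.exp_re]
  simp

lemma cosMap_analytic (L : ℝ) : AnalyticOnNhd ℝ (cosMap L) Set.univ := by
  intro k _
  have : cosMap L = fun k => 
    (Complex.reCLM.compLeftContinuous ℝ (Set.Icc (0:ℝ) L)) (NormedSpace.exp (k • imMap L)) :=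
    funext (cosMap_eq L)
  rw [this]
  refine (ContinuousLinearMap.analyticAt _ _).comp ?_
  refine AnalyticAt.fun_comp (g := NormedSpace.exp) (NormedSpace.exp_analytic (𝕂 := ℝ) _) ?_
  exact (analyticAt_id).smul analyticAt_const

lemma cosMap_mem (L k0 k : ℝ) : cosMap L k ∈
    (Submodule.span ℝ (cosMap L '' Set.Ici k0)).topologicalClosure := by
  set M := (Submodule.span ℝ (cosMap L '' Set.Ici k0)).topologicalClosure with hM
  have hcl : IsClosed (M : Set C(Set.Icc (0:ℝ) L, ℝ)) := Submodule.isClosed_topologicalClosure _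
  have := hcl
  have han : AnalyticOnNhd ℝ (fun k => M.mkQL (cosMap L k)) Set.univ := fun k hk =>
    (ContinuousLinearMap.analyticAt _ _).comp (cosMap_analytic L k hk)
  have h0 : (fun k => M.mkQL (cosMap L k)) =ᶠ[nhds (k0 + 1)] 0 := by
    filter_upwards [Ioi_mem_nhds (show k0 < k0 + 1 by linarith)] with k hk
    have : cosMap L k ∈ M := Submodule.le_topologicalClosure _
      (Submodule.subset_span ⟨k, Set.mem_Ici.2 (le_of_lt hk), rfl⟩)
    simpa using this
  have := han.eqOn_zero_of_preconnected_of_eventuallyEq_zero isPreconnected_univ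
    (Set.mem_univ _) h0 (Set.mem_univ k)
  simpa using this

lemma cosSpan_mul (L : ℝ) {f g : C(Set.Icc (0:ℝ) L, ℝ)}
    (hf : f ∈ Submodule.span ℝ (Set.range (cosMap L)))
    (hg : g ∈ Submodule.span ℝ (Set.range (cosMap L))) :
    f * g ∈ Submodule.span ℝ (Set.range (cosMap L)) := by
  have h := Submodule.mul_mem_mul hf hg
  rw [Submodule.span_mul_span] at h
  refine Submodule.span_le.2 ?_ h
  rintro _ ⟨_, ⟨a, rfl⟩, _, ⟨b, rfl⟩, rfl⟩
  have : cosMap L a * cosMap L b = (1/2 : ℝ) • cosMap L (a + b) + (1/2 : ℝ) • cosMap L (a - b) := by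
    ext s
    change Real.cos (a * s) * Real.cos (b * s)
      = (1/2 : ℝ) * Real.cos ((a + b) * s) + (1/2 : ℝ) * Real.cos ((a - b) * s)
    rw [add_mul, sub_mul, Real.cos_add, Real.cos_sub]; ring
  change cosMap L a * cosMap L b ∈ _
  rw [this]
  exact Submodule.add_mem _ (Submodule.smul_mem _ _ (Submodule.subset_span ⟨_, rfl⟩))
    (Submodule.smul_mem _ _ (Submodule.subset_span ⟨_, rfl⟩))

lemma cosSpan_dense (L k0 : ℝ) (hL : 0 < L) :
    (Submodule.span ℝ (cosMap L '' Set.Ici k0)).topologicalClosure = ⊤ := by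
  set M := (Submodule.span ℝ (cosMap L '' Set.Ici k0)).topologicalClosure with hM
  have h1 : Submodule.span ℝ (Set.range (cosMap L)) ≤ M := by
    refine Submodule.span_le.2 ?_
    rintro _ ⟨k, rfl⟩
    exact cosMap_mem L k0 k
  let A : Subalgebra ℝ C(Set.Icc (0:ℝ) L, ℝ) :=
    { Submodule.span ℝ (Set.range (cosMap L)) with
      mul_mem' := fun hf hg => cosSpan_mul L hf hg
      algebraMap_mem' := by
        intro r
        have : algebraMap ℝ C(Set.Icc (0:ℝ) L, ℝ) r = r • cosMap L 0 := by
          ext s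
          change r = r * Real.cos (0 * s)
          simp
        rw [this]
        exact Submodule.smul_mem _ _ (Submodule.subset_span ⟨_, rfl⟩) }
  have hA : A.SeparatesPoints := by
    intro x y hxy
    refine ⟨cosMap L (Real.pi / L), ⟨cosMap L (Real.pi / L), Submodule.subset_span ⟨_, rfl⟩, rfl⟩, ?_⟩
    change Real.cos (Real.pi / L * x) ≠ Real.cos (Real.pi / L * y)
    intro h
    apply hxy
    have hp : 0 < Real.pi / L := div_pos Real.pi_pos hL
    have key : ∀ z : Set.Icc (0:ℝ) L, Real.pi / L * z ∈ Set.Icc 0 Real.pi := fun z =>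
      ⟨mul_nonneg hp.le z.2.1, by
        calc Real.pi / L * z ≤ Real.pi / L * L := mul_le_mul_of_nonneg_left z.2.2 hp.le
          _ = Real.pi := by field_simp⟩
    have := Real.injOn_cos (key x) (key y) h
    exact Subtype.ext (mul_left_cancel₀ hp.ne' this)
  have h2 := ContinuousMap.subalgebra_topologicalClosure_eq_top_of_separatesPoints A hA
  rw [eq_top_iff]
  intro f _
  have hf : f ∈ A.topologicalClosure := by rw [h2]; trivial
  have h3 : closure (A : Set C(Set.Icc (0:ℝ) L, ℝ)) ⊆ M :=
    closure_minimal h1 (Submodule.isClosed_topologicalClosure _)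
  exact h3 hf

lemma cos_dense (L k0 : ℝ) (hL : 0 < L) (χ : ℝ → ℝ) (hχ : Continuous χ) (δ : ℝ) (hδ : 0 < δ) :
    ∃ K : Finset ℝ, (∀ k ∈ K, k0 ≤ k) ∧ ∃ c : ℝ → ℝ, ∀ s ∈ Set.Icc (0:ℝ) L,
      |χ s - ∑ k ∈ K, c k * Real.cos (k * s)| ≤ δ := by
  let X : C(Set.Icc (0:ℝ) L, ℝ) := ⟨fun s => χ s, by fun_prop⟩
  have hX : X ∈ closure ((Submodule.span ℝ (cosMap L '' Set.Ici k0) : Submodule ℝ _) :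
      Set C(Set.Icc (0:ℝ) L, ℝ)) := by
    rw [← Submodule.topologicalClosure_coe, cosSpan_dense L k0 hL]; trivial
  obtain ⟨g, hg, hd⟩ := Metric.mem_closure_iff.1 hX δ hδ
  obtain ⟨c, hc, hcg⟩ := (Finsupp.mem_span_image_iff_linearCombination ℝ).1 hg
  refine ⟨c.support, fun k hk => hc hk, c, fun s hs => ?_⟩
  have h1 := (ContinuousMap.dist_apply_le_dist (f := X) (g := g) ⟨s, hs⟩).trans hd.le
  rw [Real.dist_eq] at h1
  have h2 : g ⟨s, hs⟩ = ∑ k ∈ c.support, c k * Real.cos (k * s) := by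
    rw [← hcg, Finsupp.linearCombination_apply, Finsupp.sum, ContinuousMap.sum_apply]
    rfl
  rw [h2] at h1
  exact h1

/-! ### Calculus helpers -/

lemma ii {f : ℝ → ℝ} (hf : Continuous f) (a b : ℝ) : IntervalIntegrable f volume a b :=
  hf.intervalIntegrable a b

/-- Fubini for continuous functions. -/
lemma fub (f : ℝ → ℝ → ℝ) (hf : Continuous (Function.uncurry f)) (a b c d : ℝ) :
    ∫ x in a..b, ∫ y in c..d, f x y = ∫ y in c..d, ∫ x in a..b, f x y := by
  refine MeasureTheory.intervalIntegral_intervalIntegral_swap ?_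
  exact (hf.continuousOn.integrableOn_compact (isCompact_uIcc.prod isCompact_uIcc)).mono_set
    (Set.prod_mono Set.uIoc_subset_uIcc Set.uIoc_subset_uIcc)

/-- Differentiation under the integral sign. -/
lemma deriv_int (F F' : ℝ → ℝ → ℝ) (a b : ℝ) (hF : Continuous (Function.uncurry F))
    (hF' : Continuous (Function.uncurry F'))
    (hd : ∀ x y, HasDerivAt (fun x => F x y) (F' x y) x) (x : ℝ) :
    HasDerivAt (fun x => ∫ y in a..b, F x y) (∫ y in a..b, F' x y) x := by
  have hK : IsCompact (Metric.closedBall x 1 ×ˢ Set.uIcc a b) :=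
    (isCompact_closedBall x 1).prod isCompact_uIcc
  obtain ⟨C, hC⟩ := hK.exists_bound_of_continuousOn hF'.continuousOn
  refine (intervalIntegral.hasDerivAt_integral_of_dominated_loc_of_deriv_le (bound := fun _ => C)
    (Metric.closedBall_mem_nhds x one_pos) ?_ ?_ ?_ ?_ ?_ ?_).2
  · exact Filter.Eventually.of_forall fun z => 
      (show Continuous (F z) from hF.comp (by fun_prop : Continuous fun y => (z, y))).aestronglyMeasurable
  · exact ii (hF.comp (by fun_prop : Continuous fun y => (x, y))) _ _
  · exact (show Continuous (F' x) from hF'.comp (by fun_prop : Continuous fun y => (x, y))).aestronglyMeasurable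
  · exact Filter.Eventually.of_forall fun y hy z hz => hC (z, y) ⟨hz, Set.uIoc_subset_uIcc hy⟩
  · exact ii continuous_const _ _
  · exact Filter.Eventually.of_forall fun y _ z _ => hd z y

/-- Fundamental theorem of calculus, everywhere version. -/
lemma ftc {F f : ℝ → ℝ} (hF : ∀ x, HasDerivAt F (f x) x) (hf : Continuous f) (a b : ℝ) :
    ∫ x in a..b, f x = F b - F a :=
  intervalIntegral.integral_eq_sub_of_hasDerivAt (fun x _ => hF x) (ii hf a b)

/-- Derivative of `x ↦ -∫ₓ^L f`. -/
lemma deriv_prim {f : ℝ → ℝ} (hf : Continuous f) (L x : ℝ) :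
    HasDerivAt (fun x => -(∫ s in x..L, f s)) (f x) x := by
  have h : (fun x => -(∫ s in x..L, f s)) = fun x => ∫ s in L..x, f s := by
    funext x; rw [intervalIntegral.integral_symm]; simp
  rw [h]
  exact intervalIntegral.integral_hasDerivAt_right (ii hf _ _)
    hf.stronglyMeasurable.stronglyMeasurableAtFilter hf.continuousAt

/-- Cauchy-Schwarz against `1`. -/
lemma cs {f : ℝ → ℝ} (hf : Continuous f) {a b : ℝ} (hab : a ≤ b) :
    (∫ x in a..b, f x)^2 ≤ (b - a) * ∫ x in a..b, (f x)^2 := by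
  rcases hab.eq_or_lt with rfl | hab'
  · simp
  set m := (∫ x in a..b, f x) / (b - a) with hm
  have hba : 0 < b - a := by linarith
  have h0 : 0 ≤ ∫ x in a..b, (f x - m)^2 :=
    intervalIntegral.integral_nonneg hab fun x _ => sq_nonneg _
  have h1 : ∫ x in a..b, (f x - m)^2 = (∫ x in a..b, (f x)^2) - 2 * m * (∫ x in a..b, f x)
      + m^2 * (b - a) := by
    have : ∀ x, (f x - m)^2 = (f x)^2 - 2 * m * f x + m^2 := fun x => by ring
    simp_rw [this]
    rw [intervalIntegral.integral_add (ii (by fun_prop) _ _) (ii (by fun_prop) _ _),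
      intervalIntegral.integral_sub (ii (by fun_prop) _ _) (ii (by fun_prop) _ _),
      intervalIntegral.integral_const_mul, intervalIntegral.integral_const]
    simp; ring
  have h2 : (∫ x in a..b, f x) = m * (b - a) := by rw [hm]; field_simp
  rw [h1, h2] at h0
  rw [h2]
  nlinarith

lemma int_mono {f g : ℝ → ℝ} (hf : Continuous f) (hg : Continuous g) {a b : ℝ} (hab : a ≤ b)
    (h : ∀ x ∈ Set.Icc a b, f x ≤ g x) : ∫ x in a..b, f x ≤ ∫ x in a..b, g x :=
  intervalIntegral.integral_mono_on hab (ii hf _ _) (ii hg _ _) h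

lemma int_nonneg {f : ℝ → ℝ} {a b : ℝ} (hab : a ≤ b)
    (h : ∀ x ∈ Set.Icc a b, 0 ≤ f x) : 0 ≤ ∫ x in a..b, f x :=
  intervalIntegral.integral_nonneg hab h

lemma int_congr {f g : ℝ → ℝ} {a b : ℝ} (hab : a ≤ b)
    (h : ∀ x ∈ Set.Icc a b, f x = g x) : ∫ x in a..b, f x = ∫ x in a..b, g x :=
  intervalIntegral.integral_congr fun x hx => h x (by rwa [Set.uIcc_of_le hab] at hx)

lemma int_add {f g : ℝ → ℝ} (hf : Continuous f) (hg : Continuous g) (a b : ℝ) :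
    ∫ x in a..b, (f x + g x) = (∫ x in a..b, f x) + ∫ x in a..b, g x :=
  intervalIntegral.integral_add (ii hf _ _) (ii hg _ _)

lemma int_cmul (c : ℝ) (f : ℝ → ℝ) (a b : ℝ) :
    ∫ x in a..b, c * f x = c * ∫ x in a..b, f x := intervalIntegral.integral_const_mul _ _

lemma int_const' (c a b : ℝ) : ∫ _x in a..b, c = (b - a) * c := by simp

/-- `|∫_a^b|` monotone in the domain for nonnegative integrands. -/
lemma int_sub_le {f : ℝ → ℝ} (hf : Continuous f) (h0 : ∀ x, 0 ≤ f x) {a b c d : ℝ}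
    (hac : c ≤ a) (hab : a ≤ b) (hbd : b ≤ d) : ∫ x in a..b, f x ≤ ∫ x in c..d, f x :=
  intervalIntegral.integral_mono_interval hac hab hbd (Filter.Eventually.of_forall h0) (ii hf _ _)

/-- continuity of parametric integrals. -/
@[fun_prop]
lemma cont_int {X : Type*} [TopologicalSpace X] {f : X → ℝ → ℝ}
    (hf : Continuous (Function.uncurry f)) (a b : ℝ) : Continuous fun x => ∫ y in a..b, f x y :=
  intervalIntegral.continuous_parametric_intervalIntegral_of_continuous' hf a b

lemma cont_prim {X : Type*} [TopologicalSpace X] {f : X → ℝ → ℝ}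
    (hf : Continuous (Function.uncurry f)) {s : X → ℝ} (hs : Continuous s) (L : ℝ) :
    Continuous fun x => -(∫ y in (s x)..L, f x y) := by
  have : (fun x => -(∫ y in (s x)..L, f x y)) = fun x => ∫ y in L..(s x), f x y := by
    funext x; rw [intervalIntegral.integral_symm]; simp
  rw [this]
  exact intervalIntegral.continuous_parametric_intervalIntegral_of_continuous hf hs

/-! ### Point evaluation by finitely many high frequency cosine coefficients -/

lemma sq_diff_le {f f' : ℝ → ℝ} (hf : ∀ x, HasDerivAt f (f' x) x) (hf' : Continuous f')
    {L : ℝ} {a b : ℝ} (ha : 0 ≤ a) (hab : a ≤ b) (hb : b ≤ L) :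
    (f b - f a)^2 ≤ (b - a) * ∫ s in (0:ℝ)..L, (f' s)^2 := by
  rw [← ftc hf hf' a b]
  refine (cs hf' hab).trans (mul_le_mul_of_nonneg_left ?_ (by linarith))
  exact int_sub_le (by fun_prop) (fun x => sq_nonneg _) ha hab hb

lemma eval_local (L k0 ε : ℝ) (hL : 0 < L) (hε : 0 < ε) (y0 : ℝ) (hy0 : y0 ∈ Set.Icc 0 L) :
    ∃ K : Finset ℝ, (∀ k ∈ K, k0 ≤ k) ∧ ∃ c : ℝ → ℝ, ∀ y ∈ Set.Icc 0 L, |y - y0| ≤ ε / 4 →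
      ∀ f f' : ℝ → ℝ, (∀ x, HasDerivAt f (f' x) x) → Continuous f' →
      (f y - ∑ k ∈ K, c k * ∫ s in (0:ℝ)..L, f s * Real.cos (k * s))^2
        ≤ ε * ((∫ s in (0:ℝ)..L, (f s)^2) + ∫ s in (0:ℝ)..L, (f' s)^2) := by
  set h := ε / 4 with hh
  have hh0 : 0 < h := by positivity
  let χ : ℝ → ℝ := fun s => max 0 (h - |s - y0|)
  have hχ : Continuous χ := by fun_prop
  have hχ0 : ∀ s, 0 ≤ χ s := fun s => le_max_left _ _
  set Z := ∫ s in (0:ℝ)..L, χ s with hZ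
  have hZ0 : 0 < Z := by
    refine intervalIntegral.integral_pos hL hχ.continuousOn (fun s _ => hχ0 s) ⟨y0, hy0, ?_⟩
    simp [χ, hh0]
  set δ := Real.sqrt (ε / (2 * L)) with hδ
  have hδ0 : 0 < δ := by positivity
  have hδ2 : δ^2 = ε / (2 * L) := Real.sq_sqrt (by positivity)
  obtain ⟨K, hK, c, hc⟩ := cos_dense L k0 hL (fun s => χ s / Z) (by fun_prop) δ hδ0
  refine ⟨K, hK, c, fun y hy hyy f f' hf hf' => ?_⟩
  have hfc : Continuous f := continuous_iff_continuousAt.2 fun x => (hf x).continuousAt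
  set D := ∫ s in (0:ℝ)..L, (f' s)^2 with hD
  set N := ∫ s in (0:ℝ)..L, (f s)^2 with hN
  have hD0 : 0 ≤ D := int_nonneg hL.le fun x _ => sq_nonneg _
  set r := Real.sqrt (2 * h * D) with hr
  have hr2 : r^2 = 2 * h * D := Real.sq_sqrt (by positivity)
  have hr0 : 0 ≤ r := Real.sqrt_nonneg _
  -- the averaging error
  have e1 : ∀ s ∈ Set.Icc 0 L, |χ s * (f y - f s)| ≤ r * χ s := by
    intro s hs
    rw [abs_mul, abs_of_nonneg (hχ0 s), mul_comm]
    by_cases hs' : |s - y0| ≤ h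
    · refine mul_le_mul_of_nonneg_right ?_ (hχ0 s)
      refine Real.abs_le_sqrt ?_
      have hd : |y - s| ≤ 2 * h := by
        have := abs_sub_le y y0 s
        rw [abs_sub_comm y0 s] at this
        linarith
      rcases le_total y s with hys | hys
      · have := sq_diff_le hf hf' hy.1 hys hs.2
        have h2 : s - y ≤ 2 * h := by
          rw [abs_sub_comm] at hd; exact (le_abs_self _).trans hd
        nlinarith
      · have := sq_diff_le hf hf' hs.1 hys hy.2
        have h2 : y - s ≤ 2 * h := (le_abs_self _).trans hd
        nlinarith
    · have : χ s = 0 := max_eq_left (by push Not at hs'; linarith)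
      simp [this]
  have e2 : |∫ s in (0:ℝ)..L, χ s * (f y - f s)| ≤ r * Z := by
    rw [hZ, ← int_cmul, abs_le]
    constructor
    · rw [← intervalIntegral.integral_neg]
      exact int_mono (by fun_prop) (by fun_prop) hL.le fun s hs => (abs_le.1 (e1 s hs)).1
    · exact int_mono (by fun_prop) (by fun_prop) hL.le fun s hs => (abs_le.1 (e1 s hs)).2
  have e3 : (∫ s in (0:ℝ)..L, χ s / Z * (f y - f s))^2 ≤ 2 * h * D := by
    have : (∫ s in (0:ℝ)..L, χ s / Z * (f y - f s))
        = Z⁻¹ * ∫ s in (0:ℝ)..L, χ s * (f y - f s) := by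
      rw [← int_cmul]; congr 1; funext s; ring
    rw [this, ← hr2, ← sq_abs, abs_mul, abs_of_pos (inv_pos.2 hZ0)]
    refine pow_le_pow_left₀ (by positivity) ?_ 2
    rw [inv_mul_le_iff₀ hZ0]; linarith
  -- the approximation error
  let g : ℝ → ℝ := fun s => χ s / Z - ∑ k ∈ K, c k * Real.cos (k * s)
  have hg : Continuous g := by fun_prop
  have e4 : (∫ s in (0:ℝ)..L, g s * f s)^2 ≤ L * (δ^2 * N) := by
    refine (cs (by fun_prop) hL.le).trans ?_
    rw [sub_zero]
    refine mul_le_mul_of_nonneg_left ?_ hL.le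
    rw [hN, ← int_cmul]
    refine int_mono (by fun_prop) (by fun_prop) hL.le fun s hs => ?_
    rw [mul_pow]
    refine mul_le_mul_of_nonneg_right ?_ (sq_nonneg _)
    rw [← sq_abs]
    exact pow_le_pow_left₀ (abs_nonneg _) (hc s hs) 2
  have e5 : f y - ∑ k ∈ K, c k * ∫ s in (0:ℝ)..L, f s * Real.cos (k * s)
      = (∫ s in (0:ℝ)..L, χ s / Z * (f y - f s)) + ∫ s in (0:ℝ)..L, g s * f s := by
    have h1 : ∑ k ∈ K, c k * ∫ s in (0:ℝ)..L, f s * Real.cos (k * s)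
        = ∫ s in (0:ℝ)..L, ∑ k ∈ K, c k * (f s * Real.cos (k * s)) := by
      rw [intervalIntegral.integral_finsetSum fun k _ => ii (by fun_prop) _ _]
      simp_rw [int_cmul]
    have h2 : f y = ∫ s in (0:ℝ)..L, Z⁻¹ * f y * χ s := by
      rw [int_cmul, ← hZ]; field_simp
    rw [h1]
    conv_lhs => rw [h2]
    rw [← int_add (by fun_prop) (by fun_prop), ← intervalIntegral.integral_sub (ii (by fun_prop) _ _)
      (ii (by fun_prop) _ _)]
    congr 1; funext s
    simp only [g]
    rw [sub_mul, Finset.sum_mul]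
    have : ∀ k, c k * Real.cos (k * s) * f s = c k * (f s * Real.cos (k * s)) := fun k => by ring
    simp_rw [this]
    ring
  rw [e5]
  set A := ∫ s in (0:ℝ)..L, χ s / Z * (f y - f s)
  set B := ∫ s in (0:ℝ)..L, g s * f s
  have e6 : L * (δ^2 * N) = ε / 2 * N := by rw [hδ2]; field_simp
  have : (A + B)^2 ≤ 2 * A^2 + 2 * B^2 := by nlinarith [sq_nonneg (A - B)]
  rw [e6] at e4
  have e7 : 2 * h * D = ε / 2 * D := by rw [hh]; ring
  rw [e7] at e3
  linarith

lemma eval_approx (L k0 ε : ℝ) (hL : 0 < L) (hε : 0 < ε) :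
    ∃ K : Finset ℝ, (∀ k ∈ K, k0 ≤ k) ∧ ∃ C : ℝ, 0 ≤ C ∧ ∀ y ∈ Set.Icc 0 L,
      ∃ c : ℝ → ℝ, (∀ k, (c k)^2 ≤ C) ∧
      ∀ f f' : ℝ → ℝ, (∀ x, HasDerivAt f (f' x) x) → Continuous f' →
      (f y - ∑ k ∈ K, c k * ∫ s in (0:ℝ)..L, f s * Real.cos (k * s))^2
        ≤ ε * ((∫ s in (0:ℝ)..L, (f s)^2) + ∫ s in (0:ℝ)..L, (f' s)^2) := by
  classical
  let P : Set ℝ → Prop := fun S => ∃ K : Finset ℝ, (∀ k ∈ K, k0 ≤ k) ∧ ∃ C : ℝ, 0 ≤ C ∧ ∀ y ∈ S,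
      ∃ c : ℝ → ℝ, (∀ k, (c k)^2 ≤ C) ∧ (∀ k, k ∉ K → c k = 0) ∧
      ∀ f f' : ℝ → ℝ, (∀ x, HasDerivAt f (f' x) x) → Continuous f' →
      (f y - ∑ k ∈ K, c k * ∫ s in (0:ℝ)..L, f s * Real.cos (k * s))^2
        ≤ ε * ((∫ s in (0:ℝ)..L, (f s)^2) + ∫ s in (0:ℝ)..L, (f' s)^2)
  have hP : P (Set.Icc 0 L) := by
    refine isCompact_Icc.induction_on ?_ ?_ ?_ ?_
    · exact ⟨∅, by simp, 0, le_rfl, by simp⟩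
    · rintro s t hst ⟨K, hK, C, hC, h⟩
      exact ⟨K, hK, C, hC, fun y hy => h y (hst hy)⟩
    · rintro s t ⟨K, hK, C, hC, h⟩ ⟨K', hK', C', hC', h'⟩
      refine ⟨K ∪ K', ?_, max C C', le_max_of_le_left hC, ?_⟩
      · intro k hk
        rcases Finset.mem_union.1 hk with hk | hk
        · exact hK k hk
        · exact hK' k hk
      · rintro y (hy | hy)
        · obtain ⟨c, h1, h2, h3⟩ := h y hy
          refine ⟨c, fun k => (h1 k).trans (le_max_left _ _), fun k hk => h2 k fun hk' =>
            hk (Finset.mem_union_left _ hk'), fun f f' hf hf' => ?_⟩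
          rw [← Finset.sum_subset (Finset.subset_union_left (s₁ := K) (s₂ := K'))
            fun k _ hk => by rw [h2 k hk, zero_mul]]
          exact h3 f f' hf hf'
        · obtain ⟨c, h1, h2, h3⟩ := h' y hy
          refine ⟨c, fun k => (h1 k).trans (le_max_right _ _), fun k hk => h2 k fun hk' =>
            hk (Finset.mem_union_right _ hk'), fun f f' hf hf' => ?_⟩
          rw [← Finset.sum_subset (Finset.subset_union_right (s₁ := K) (s₂ := K'))
            fun k _ hk => by rw [h2 k hk, zero_mul]]
          exact h3 f f' hf hf'
    · intro y0 hy0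
      obtain ⟨K, hK, c, hc⟩ := eval_local L k0 ε hL hε y0 hy0
      refine ⟨Metric.closedBall y0 (ε / 4) ∩ Set.Icc 0 L, ?_, K, hK, ∑ k ∈ K, (c k)^2,
        Finset.sum_nonneg fun k _ => sq_nonneg _, ?_⟩
      · exact Filter.inter_mem (mem_nhdsWithin_of_mem_nhds
          (Metric.closedBall_mem_nhds y0 (by positivity))) self_mem_nhdsWithin
      · rintro y ⟨hy1, hy2⟩
        refine ⟨fun k => if k ∈ K then c k else 0, ?_, ?_, fun f f' hf hf' => ?_⟩
        · intro k
          by_cases hk : k ∈ K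
          · simp only [hk, if_true]
            exact Finset.single_le_sum (f := fun k => (c k)^2) (fun k _ => sq_nonneg _) hk
          · simp only [hk, if_false]
            have : 0 ≤ ∑ k ∈ K, (c k)^2 := Finset.sum_nonneg fun k _ => sq_nonneg _
            simpa using this
        · intro k hk; simp [hk]
        · have h1 := hc y hy2 (by simpa [Real.dist_eq] using hy1) f f' hf hf'
          have h2 : ∑ k ∈ K, (if k ∈ K then c k else 0) * ∫ s in (0:ℝ)..L, f s * Real.cos (k * s)
              = ∑ k ∈ K, c k * ∫ s in (0:ℝ)..L, f s * Real.cos (k * s) :=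
            Finset.sum_congr rfl fun k hk => by rw [if_pos hk]
          simp only [h2]
          exact h1
  obtain ⟨K, hK, C, hC, h⟩ := hP
  refine ⟨K, hK, C, hC, fun y hy => ?_⟩
  obtain ⟨c, h1, _, h3⟩ := h y hy
  exact ⟨c, h1, h3⟩

/-! ### Static identities in one space variable -/

lemma stat_one (L α : ℝ) (hL : 0 < L) (f f1 f2 f3 h G : ℝ → ℝ)
    (d0 : ∀ x, HasDerivAt f (f1 x) x) (d1 : ∀ x, HasDerivAt f1 (f2 x) x)
    (d2 : ∀ x, HasDerivAt f2 (f3 x) x) (c3 : Continuous f3) (ch : Continuous h)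
    (cG : Continuous G) (eq : ∀ x ∈ Set.Icc 0 L, h x + f1 x + f3 x + G x = 0)
    (b0 : f 0 = 0) (bL : f L = 0) (b1 : f1 L = α * f1 0) :
    ((∫ x in (0:ℝ)..L, 2 * (f x * h x)) + (1 - α^2) * (f1 0)^2
      + ∫ x in (0:ℝ)..L, 2 * (f x * G x)) = 0 ∧
    ((∫ x in (0:ℝ)..L, 2 * (x * f x * h x)) - (∫ x in (0:ℝ)..L, (f x)^2)
      + 3 * (∫ x in (0:ℝ)..L, (f1 x)^2) - L * α^2 * (f1 0)^2
      + ∫ x in (0:ℝ)..L, 2 * (x * f x * G x)) = 0 := by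
  have k0 : Continuous f := continuous_iff_continuousAt.2 fun x => (d0 x).continuousAt
  have k1 : Continuous f1 := continuous_iff_continuousAt.2 fun x => (d1 x).continuousAt
  have k2 : Continuous f2 := continuous_iff_continuousAt.2 fun x => (d2 x).continuousAt
  constructor
  · have hd : ∀ x, HasDerivAt (fun x => (f x)^2 + 2 * (f x * f2 x) - (f1 x)^2)
        (2 * (f x * (f1 x + f3 x))) x := by
      intro x
      have := (((d0 x).pow 2).add (((d0 x).mul (d2 x)).const_mul 2)).sub ((d1 x).pow 2)
      refine this.congr_deriv ?_
      push_cast; ring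
    have := ftc hd (by fun_prop) 0 L
    rw [b0, bL, b1] at this
    have e : ∫ x in (0:ℝ)..L, 2 * (f x * (f1 x + f3 x))
        = -((∫ x in (0:ℝ)..L, 2 * (f x * h x)) + ∫ x in (0:ℝ)..L, 2 * (f x * G x)) := by
      rw [← int_add (by fun_prop) (by fun_prop), ← intervalIntegral.integral_neg]
      refine int_congr hL.le fun x hx => ?_
      have := eq x hx
      have : f1 x + f3 x = -(h x) - G x := by linarith
      rw [this]; ring
    rw [e] at this
    linear_combination -this
  · have hd : ∀ x, HasDerivAt (fun x => x * (f x)^2 + 2 * (x * (f x * f2 x)) - x * (f1 x)^2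
        - 2 * (f x * f1 x))
        ((f x)^2 + 2 * (x * f x * (f1 x + f3 x)) + (-3) * (f1 x)^2) x := by
      intro x
      have := ((((hasDerivAt_id x).mul ((d0 x).pow 2)).add
        (((hasDerivAt_id x).mul ((d0 x).mul (d2 x))).const_mul 2)).sub
        ((hasDerivAt_id x).mul ((d1 x).pow 2))).sub (((d0 x).mul (d1 x)).const_mul 2)
      refine this.congr_deriv ?_
      simp only [id, Pi.mul_apply, Pi.pow_apply]
      push_cast; ring
    have := ftc hd (by fun_prop) 0 L
    rw [b0, bL, b1, int_add (by fun_prop) (by fun_prop), int_add (by fun_prop) (by fun_prop),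
      int_cmul (-3)] at this
    have e : ∫ x in (0:ℝ)..L, 2 * (x * f x * (f1 x + f3 x))
        = -((∫ x in (0:ℝ)..L, 2 * (x * f x * h x)) + ∫ x in (0:ℝ)..L, 2 * (x * f x * G x)) := by
      rw [← int_add (by fun_prop) (by fun_prop), ← intervalIntegral.integral_neg]
      refine int_congr hL.le fun x hx => ?_
      have := eq x hx
      have : f1 x + f3 x = -(h x) - G x := by linarith
      rw [this]; ring
    rw [e] at this
    linear_combination -this

/-- Integrals of `2 u w` and `2 x u w` when `w L = 0` and `u` is the derivative of `w`. -/
lemma stat_sq (L : ℝ) (w u : ℝ → ℝ) (hw : ∀ x, HasDerivAt w (u x) x) (hu : Continuous u)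
    (wL : w L = 0) :
    (∫ x in (0:ℝ)..L, 2 * (u x * w x)) = -(w 0)^2 ∧
    (∫ x in (0:ℝ)..L, 2 * (x * u x * w x)) = -∫ x in (0:ℝ)..L, (w x)^2 := by
  have kw : Continuous w := continuous_iff_continuousAt.2 fun x => (hw x).continuousAt
  constructor
  · have hd : ∀ x, HasDerivAt (fun x => (w x)^2) (2 * (u x * w x)) x := by
      intro x
      refine ((hw x).pow 2).congr_deriv ?_
      push_cast; ring
    rw [ftc hd (by fun_prop) 0 L, wL]; ring
  · have hd : ∀ x, HasDerivAt (fun x => x * (w x)^2) (2 * (x * u x * w x) + (w x)^2) x := by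
      intro x
      refine ((hasDerivAt_id x).mul ((hw x).pow 2)).congr_deriv ?_
      simp only [id, Pi.pow_apply]
      push_cast; ring
    have := ftc hd (by fun_prop) 0 L
    rw [int_add (by fun_prop) (by fun_prop), wL] at this
    linear_combination this

/-- Interpolation: `k ∫ u² ≤ ½ ∫ u_x² + ½ k² ∫ w²`. -/
lemma stat_interp (L k : ℝ) (hL : 0 < L) (w u u1 : ℝ → ℝ) (hw : ∀ x, HasDerivAt w (u x) x)
    (hu : ∀ x, HasDerivAt u (u1 x) x) (c1 : Continuous u1) (b0 : u 0 = 0) (bL : u L = 0) :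
    2 * k * (∫ x in (0:ℝ)..L, (u x)^2)
      ≤ (∫ x in (0:ℝ)..L, (u1 x)^2) + k^2 * ∫ x in (0:ℝ)..L, (w x)^2 := by
  have kw : Continuous w := continuous_iff_continuousAt.2 fun x => (hw x).continuousAt
  have ku : Continuous u := continuous_iff_continuousAt.2 fun x => (hu x).continuousAt
  have hd : ∀ x, HasDerivAt (fun x => u x * w x) ((u x)^2 + u1 x * w x) x := by
    intro x
    refine ((hu x).mul (hw x)).congr_deriv ?_
    ring
  have := ftc hd (by fun_prop) 0 L
  rw [int_add (by fun_prop) (by fun_prop), b0, bL] at this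
  have h0 : 0 ≤ ∫ x in (0:ℝ)..L, (u1 x + k * w x)^2 := int_nonneg hL.le fun x _ => sq_nonneg _
  have h1 : ∀ x, (u1 x + k * w x)^2 = (u1 x)^2 + 2 * k * (u1 x * w x) + k^2 * (w x)^2 :=
    fun x => by ring
  simp_rw [h1] at h0
  rw [int_add (by fun_prop) (by fun_prop), int_add (by fun_prop) (by fun_prop), int_cmul,
    int_cmul] at h0
  have h2 : (∫ x in (0:ℝ)..L, u1 x * w x) = - ∫ x in (0:ℝ)..L, (u x)^2 := by linarith
  rw [h2] at h0
  linarith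

/-- Interpolation with a remainder. -/
lemma stat_rem (L η : ℝ) (hL : 0 < L) (hη : 0 < η) (g u u1 r : ℝ → ℝ)
    (hg : ∀ x, HasDerivAt g (u x - r x) x)
    (hu : ∀ x, HasDerivAt u (u1 x) x) (c1 : Continuous u1) (cr : Continuous r)
    (b0 : u 0 = 0) (bL : u L = 0) :
    (∫ x in (0:ℝ)..L, (u x)^2) ≤ 2 * η * (∫ x in (0:ℝ)..L, (u1 x)^2)
      + 1 / (2 * η) * (∫ x in (0:ℝ)..L, (g x)^2) + ∫ x in (0:ℝ)..L, (r x)^2 := by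
  have kg : Continuous g := continuous_iff_continuousAt.2 fun x => (hg x).continuousAt
  have ku : Continuous u := continuous_iff_continuousAt.2 fun x => (hu x).continuousAt
  have hd : ∀ x, HasDerivAt (fun x => u x * g x) (u1 x * g x + u x * (u x - r x)) x := by
    intro x
    exact (hu x).mul (hg x)
  have h1 := ftc hd (by fun_prop) 0 L
  rw [b0, bL] at h1
  have h2 : ∫ x in (0:ℝ)..L, ((u x)^2 + (-2) * (u1 x * g x + u x * (u x - r x)))
    ≤ ∫ x in (0:ℝ)..L, (2 * η * (u1 x)^2 + 1 / (2 * η) * (g x)^2 + (r x)^2) := by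
    refine int_mono (by fun_prop) (by fun_prop) hL.le fun x _ => ?_
    have e : 2 * η * (u1 x)^2 + 1 / (2 * η) * (g x)^2 + 2 * (u1 x * g x)
      = 1 / (2 * η) * (2 * η * u1 x + g x)^2 := by field_simp; ring
    have : 0 ≤ 1 / (2 * η) * (2 * η * u1 x + g x)^2 := by positivity
    nlinarith [sq_nonneg (u x - r x)]
  rw [int_add (by fun_prop) (by fun_prop), int_add (by fun_prop) (by fun_prop),
    int_add (by fun_prop) (by fun_prop), int_cmul, int_cmul, int_cmul, h1] at h2
  linarith

/-! ### Set-up for the system -/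

/-- `∂ₓ⁻¹` of a function of `(x,y,t)`. -/
def Wp (L : ℝ) (f : ℝ → ℝ → ℝ → ℝ) (x y t : ℝ) : ℝ := -(∫ s in x..L, f s y t)

/-- Cosine coefficient in `y`. -/
def Ck (L k : ℝ) (f : ℝ → ℝ → ℝ → ℝ) (x t : ℝ) : ℝ :=
  ∫ y in (0:ℝ)..L, f x y t * Real.cos (k * y)

/-- A function of three variables is jointly continuous. -/
abbrev C3 (f : ℝ → ℝ → ℝ → ℝ) : Prop := Continuous fun p : ℝ × ℝ × ℝ => f p.1 p.2.1 p.2.2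

@[fun_prop]
lemma Wp_cont {X : Type*} [TopologicalSpace X] (L : ℝ) {f : ℝ → ℝ → ℝ → ℝ} (hf : C3 f)
    {a b c : X → ℝ} (ha : Continuous a) (hb : Continuous b) (hc : Continuous c) :
    Continuous fun z => Wp L f (a z) (b z) (c z) := by
  unfold Wp
  exact cont_prim (f := fun z s => f s (b z) (c z)) (by unfold C3 at hf; fun_prop) ha L

@[fun_prop]
lemma Ck_cont {X : Type*} [TopologicalSpace X] (L k : ℝ) {f : ℝ → ℝ → ℝ → ℝ} (hf : C3 f)
    {a c : X → ℝ} (ha : Continuous a) (hc : Continuous c) :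
    Continuous fun z => Ck L k f (a z) (c z) := by
  unfold Ck
  unfold C3 at hf
  fun_prop

lemma Wp_dx {L : ℝ} {f : ℝ → ℝ → ℝ → ℝ} (hf : C3 f) (x y t : ℝ) :
    HasDerivAt (fun x => Wp L f x y t) (f x y t) x :=
  deriv_prim (f := fun s => f s y t) (by unfold C3 at hf; fun_prop) L x

lemma Wp_dy {L : ℝ} {f fy : ℝ → ℝ → ℝ → ℝ} (hf : C3 f) (hfy : C3 fy)
    (hd : ∀ x y t, HasDerivAt (fun y => f x y t) (fy x y t) y) (x y t : ℝ) :
    HasDerivAt (fun y => Wp L f x y t) (Wp L fy x y t) y := by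
  unfold C3 at hf hfy
  exact (deriv_int (fun y s => f s y t) (fun y s => fy s y t) x L (by fun_prop) (by fun_prop)
    (fun y s => hd s y t) y).neg

lemma Ck_dx {L k : ℝ} {f fx : ℝ → ℝ → ℝ → ℝ} (hf : C3 f) (hfx : C3 fx)
    (hd : ∀ x y t, HasDerivAt (fun x => f x y t) (fx x y t) x) (x t : ℝ) :
    HasDerivAt (fun x => Ck L k f x t) (Ck L k fx x t) x := by
  unfold C3 at hf hfx
  exact deriv_int (fun x y => f x y t * Real.cos (k * y)) (fun x y => fx x y t * Real.cos (k * y))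
    0 L (by fun_prop) (by fun_prop) (fun x y => (hd x y t).mul_const _) x

lemma Ck_dt {L k : ℝ} {f ft : ℝ → ℝ → ℝ → ℝ} (hf : C3 f) (hft : C3 ft)
    (hd : ∀ x y t, HasDerivAt (fun t => f x y t) (ft x y t) t) (x t : ℝ) :
    HasDerivAt (fun t => Ck L k f x t) (Ck L k ft x t) t := by
  unfold C3 at hf hft
  exact deriv_int (fun t y => f x y t * Real.cos (k * y)) (fun t y => ft x y t * Real.cos (k * y))
    0 L (by fun_prop) (by fun_prop) (fun t y => (hd x y t).mul_const _) t

/-- Classical solutions with named derivatives. -/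
structure Sol (L T α β : ℝ) (u ux uxx uxxx uy uyy ut : ℝ → ℝ → ℝ → ℝ) : Prop where
  cu : C3 u
  cux : C3 ux
  cuxx : C3 uxx
  cuxxx : C3 uxxx
  cuy : C3 uy
  cuyy : C3 uyy
  cut : C3 ut
  dx : ∀ x y t, HasDerivAt (fun x => u x y t) (ux x y t) x
  dxx : ∀ x y t, HasDerivAt (fun x => ux x y t) (uxx x y t) x
  dxxx : ∀ x y t, HasDerivAt (fun x => uxx x y t) (uxxx x y t) x
  dy : ∀ x y t, HasDerivAt (fun y => u x y t) (uy x y t) y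
  dyy : ∀ x y t, HasDerivAt (fun y => uy x y t) (uyy x y t) y
  dt : ∀ x y t, HasDerivAt (fun t => u x y t) (ut x y t) t
  pde : ∀ x ∈ Set.Icc 0 L, ∀ y ∈ Set.Icc 0 L, ∀ t ∈ Set.Icc 0 T,
    ut x y t + ux x y t + uxxx x y t + Wp L uyy x y t = 0
  b0 : ∀ y ∈ Set.Icc 0 L, ∀ t ∈ Set.Icc 0 T, u 0 y t = 0
  bL : ∀ y ∈ Set.Icc 0 L, ∀ t ∈ Set.Icc 0 T, u L y t = 0
  b1 : ∀ y ∈ Set.Icc 0 L, ∀ t ∈ Set.Icc 0 T, ux L y t = α * ux 0 y t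
  cL : ∀ x ∈ Set.Icc 0 L, ∀ t ∈ Set.Icc 0 T, uy x L t = β * ux x L t
  c0 : ∀ x ∈ Set.Icc 0 L, ∀ t ∈ Set.Icc 0 T, uy x 0 t = 0

section sol

variable {L T α β : ℝ} {u ux uxx uxxx uy uyy ut : ℝ → ℝ → ℝ → ℝ}

lemma Wp_L (f : ℝ → ℝ → ℝ → ℝ) (y t : ℝ) : Wp L f L y t = 0 := by simp [Wp]

lemma v_L (hL : 0 < L) (S : Sol L T α β u ux uxx uxxx uy uyy ut) {x t : ℝ}
    (hx : x ∈ Set.Icc 0 L) (ht : t ∈ Set.Icc 0 T) : Wp L uy x L t = β * u x L t := by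
  have h1 : ∫ s in x..L, uy s L t = ∫ s in x..L, β * ux s L t :=
    int_congr hx.2 fun s hs => S.cL s ⟨hx.1.trans hs.1, hs.2⟩ t ht
  have hc := S.cux
  have h2 := ftc (fun s => S.dx s L t) (by fun_prop) x L
  rw [S.bL L ⟨hL.le, le_rfl⟩ t ht] at h2
  rw [Wp, h1, int_cmul, h2]; ring

lemma v_0 (S : Sol L T α β u ux uxx uxxx uy uyy ut) {x t : ℝ}
    (hx : x ∈ Set.Icc 0 L) (ht : t ∈ Set.Icc 0 T) : Wp L uy x 0 t = 0 := by
  have h1 : ∫ s in x..L, uy s 0 t = ∫ s in x..L, (0:ℝ) :=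
    int_congr hx.2 fun s hs => S.c0 s ⟨hx.1.trans hs.1, hs.2⟩ t ht
  rw [Wp, h1]; simp

/-- `∂ₓ⁻¹f` is controlled by `f`. -/
lemma Wp_sq_le {f : ℝ → ℝ → ℝ → ℝ} (hf : C3 f) {x : ℝ} (hx : x ∈ Set.Icc 0 L) (y t : ℝ) :
    (Wp L f x y t)^2 ≤ L * ∫ s in (0:ℝ)..L, (f s y t)^2 := by
  have hL : 0 ≤ L := hx.1.trans hx.2
  unfold C3 at hf
  have hn : 0 ≤ ∫ s in (0:ℝ)..L, (f s y t)^2 := int_nonneg hL fun x _ => sq_nonneg _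
  rw [Wp, neg_sq]
  refine (cs (f := fun s => f s y t) (by fun_prop) hx.2).trans ?_
  refine mul_le_mul (by linarith [hx.1]) ?_ (int_nonneg hx.2 fun x _ => sq_nonneg _) hL
  exact int_sub_le (by fun_prop) (fun x => sq_nonneg _) hx.1 hx.2 le_rfl

lemma Wp_int_le (hL : 0 < L) {f : ℝ → ℝ → ℝ → ℝ} (hf : C3 f) (y t : ℝ) :
    ∫ x in (0:ℝ)..L, (Wp L f x y t)^2 ≤ L^2 * ∫ s in (0:ℝ)..L, (f s y t)^2 := by
  have h : ∫ x in (0:ℝ)..L, (Wp L f x y t)^2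
      ≤ ∫ _x in (0:ℝ)..L, L * ∫ s in (0:ℝ)..L, (f s y t)^2 :=
    int_mono (by fun_prop) (by fun_prop) hL.le fun x hx => Wp_sq_le hf hx y t
  rw [int_const'] at h
  linarith

/-- The nonlocal term tested with `m u`. -/
lemma nonlocal (hL : 0 < L) (S : Sol L T α β u ux uxx uxxx uy uyy ut) {t : ℝ}
    (ht : t ∈ Set.Icc 0 T) (m : ℝ → ℝ) (hm : Continuous m) :
    ∫ y in (0:ℝ)..L, ∫ x in (0:ℝ)..L, 2 * (m x * u x y t * Wp L uyy x y t)
      = 2 * β * (∫ x in (0:ℝ)..L, m x * (u x L t)^2)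
        - ∫ y in (0:ℝ)..L, ∫ x in (0:ℝ)..L, 2 * (m x * uy x y t * Wp L uy x y t) := by
  have cu := S.cu
  have cuy := S.cuy
  have cuyy := S.cuyy
  rw [fub _ (by fun_prop), fub (fun y x => 2 * (m x * uy x y t * Wp L uy x y t)) (by fun_prop),
    ← int_cmul, ← intervalIntegral.integral_sub (ii (by fun_prop) _ _) (ii (by fun_prop) _ _)]
  refine int_congr hL.le fun x hx => ?_
  have hd : ∀ y, HasDerivAt (fun y => 2 * (m x * (u x y t * Wp L uy x y t)))
      (2 * (m x * uy x y t * Wp L uy x y t) + 2 * (m x * u x y t * Wp L uyy x y t)) y := by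
    intro y
    refine ((((S.dy x y t).mul (Wp_dy cuy cuyy S.dyy x y t)).const_mul (m x)).const_mul 2).congr_deriv ?_
    ring
  have := ftc hd (by fun_prop) 0 L
  rw [int_add (by fun_prop) (by fun_prop), v_L hL S hx ht, v_0 S hx ht] at this
  linear_combination this

lemma stat_two (hL : 0 < L) (S : Sol L T α β u ux uxx uxxx uy uyy ut) {t : ℝ}
    (ht : t ∈ Set.Icc 0 T) :
    ((∫ y in (0:ℝ)..L, ∫ x in (0:ℝ)..L, 2 * (u x y t * ut x y t))
      + (1 - α^2) * (∫ y in (0:ℝ)..L, (ux 0 y t)^2)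
      + 2 * β * (∫ x in (0:ℝ)..L, (u x L t)^2)
      + ∫ y in (0:ℝ)..L, (Wp L uy 0 y t)^2) = 0 ∧
    ((∫ y in (0:ℝ)..L, ∫ x in (0:ℝ)..L, 2 * (x * u x y t * ut x y t))
      - (∫ y in (0:ℝ)..L, ∫ x in (0:ℝ)..L, (u x y t)^2)
      + 3 * (∫ y in (0:ℝ)..L, ∫ x in (0:ℝ)..L, (ux x y t)^2)
      - L * α^2 * (∫ y in (0:ℝ)..L, (ux 0 y t)^2)
      + 2 * β * (∫ x in (0:ℝ)..L, x * (u x L t)^2)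
      + ∫ y in (0:ℝ)..L, ∫ x in (0:ℝ)..L, (Wp L uy x y t)^2) = 0 := by
  have cu := S.cu
  have cux := S.cux
  have cuxxx := S.cuxxx
  have cuy := S.cuy
  have cuyy := S.cuyy
  have cut := S.cut
  have key : ∀ y ∈ Set.Icc 0 L, _ := fun y hy =>
    stat_one L α hL (fun x => u x y t) (fun x => ux x y t) (fun x => uxx x y t)
      (fun x => uxxx x y t) (fun x => ut x y t) (fun x => Wp L uyy x y t)
      (fun x => S.dx x y t) (fun x => S.dxx x y t) (fun x => S.dxxx x y t)
      (by fun_prop) (by fun_prop) (by fun_prop) (fun x hx => S.pde x hx y hy t ht)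
      (S.b0 y hy t ht) (S.bL y hy t ht) (S.b1 y hy t ht)
  have sq : ∀ y, _ := fun y => stat_sq L (fun x => Wp L uy x y t) (fun x => uy x y t)
    (fun x => Wp_dx cuy x y t) (by fun_prop) (Wp_L _ _ _)
  constructor
  · have h1 : ∫ y in (0:ℝ)..L, ((∫ x in (0:ℝ)..L, 2 * (u x y t * ut x y t))
        + (1 - α^2) * (ux 0 y t)^2
        + ∫ x in (0:ℝ)..L, 2 * (1 * u x y t * Wp L uyy x y t)) = ∫ y in (0:ℝ)..L, (0:ℝ) :=
      int_congr hL.le fun y hy => by simpa only [one_mul] using (key y hy).1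
    rw [int_add (by fun_prop) (by fun_prop), int_add (by fun_prop) (by fun_prop), int_cmul,
      nonlocal hL S ht (fun _ => 1) continuous_const] at h1
    have h2 : ∫ y in (0:ℝ)..L, ∫ x in (0:ℝ)..L, 2 * (1 * uy x y t * Wp L uy x y t)
        = - ∫ y in (0:ℝ)..L, (Wp L uy 0 y t)^2 := by
      rw [← intervalIntegral.integral_neg]
      exact int_congr hL.le fun y _ => by simpa only [one_mul] using (sq y).1
    rw [h2] at h1
    simp only [one_mul, intervalIntegral.integral_zero] at h1
    linear_combination h1
  · have h1 : ∫ y in (0:ℝ)..L, ((∫ x in (0:ℝ)..L, 2 * (x * u x y t * ut x y t))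
        + (-1) * (∫ x in (0:ℝ)..L, (u x y t)^2)
        + 3 * (∫ x in (0:ℝ)..L, (ux x y t)^2)
        + (- (L * α^2)) * (ux 0 y t)^2
        + ∫ x in (0:ℝ)..L, 2 * (x * u x y t * Wp L uyy x y t)) = ∫ y in (0:ℝ)..L, (0:ℝ) :=
      int_congr hL.le fun y hy => by linear_combination (key y hy).2
    rw [int_add (by fun_prop) (by fun_prop), int_add (by fun_prop) (by fun_prop),
      int_add (by fun_prop) (by fun_prop), int_add (by fun_prop) (by fun_prop), int_cmul, int_cmul,
      int_cmul, nonlocal hL S ht (fun x => x) continuous_id] at h1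
    have h2 : ∫ y in (0:ℝ)..L, ∫ x in (0:ℝ)..L, 2 * (x * uy x y t * Wp L uy x y t)
        = - ∫ y in (0:ℝ)..L, ∫ x in (0:ℝ)..L, (Wp L uy x y t)^2 := by
      rw [← intervalIntegral.integral_neg]
      exact int_congr hL.le fun y _ => (sq y).2
    rw [h2] at h1
    simp only [intervalIntegral.integral_zero] at h1
    linear_combination h1

/-! ### Time integration -/

lemma time_weight (T : ℝ) (f ft : ℝ → ℝ → ℝ) (cf : Continuous (Function.uncurry f))
    (cft : Continuous (Function.uncurry ft))
    (hd : ∀ x t, HasDerivAt (fun t => f x t) (ft x t) t) :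
    ∫ t in (0:ℝ)..T, (T - t) * ∫ x in (0:ℝ)..L, 2 * (f x t * ft x t)
      = -T * (∫ x in (0:ℝ)..L, (f x 0)^2) + ∫ t in (0:ℝ)..T, ∫ x in (0:ℝ)..L, (f x t)^2 := by
  have h1 : ∀ t, (T - t) * ∫ x in (0:ℝ)..L, 2 * (f x t * ft x t)
      = ∫ x in (0:ℝ)..L, (T - t) * (2 * (f x t * ft x t)) := fun t => (int_cmul _ _ _ _).symm
  simp_rw [h1]
  rw [fub _ (by fun_prop), fub (fun t x => (f x t)^2) (by fun_prop), ← int_cmul,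
    ← int_add (by fun_prop) (by fun_prop)]
  congr 1
  funext x
  have hd' : ∀ t, HasDerivAt (fun t => (T - t) * (f x t)^2)
      ((T - t) * (2 * (f x t * ft x t)) + (-1) * (f x t)^2) t := by
    intro t
    refine (((hasDerivAt_const t T).sub (hasDerivAt_id t)).mul ((hd x t).pow 2)).congr_deriv ?_
    simp only [id, Pi.pow_apply, Pi.sub_apply]
    push_cast; ring
  have := ftc hd' (by fun_prop) 0 T
  rw [int_add (by fun_prop) (by fun_prop), int_cmul] at this
  linear_combination this

lemma time_x (T : ℝ) (hL : 0 < L) (f ft : ℝ → ℝ → ℝ) (cf : Continuous (Function.uncurry f))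
    (cft : Continuous (Function.uncurry ft))
    (hd : ∀ x t, HasDerivAt (fun t => f x t) (ft x t) t) :
    -L * (∫ x in (0:ℝ)..L, (f x 0)^2)
      ≤ ∫ t in (0:ℝ)..T, ∫ x in (0:ℝ)..L, 2 * (x * f x t * ft x t) := by
  rw [fub _ (by fun_prop), ← int_cmul]
  refine int_mono (by fun_prop) (by fun_prop) hL.le fun x hx => ?_
  have hd' : ∀ t, HasDerivAt (fun t => x * (f x t)^2) (2 * (x * f x t * ft x t)) t := by
    intro t
    refine (((hd x t).pow 2).const_mul x).congr_deriv ?_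
    push_cast; ring
  rw [ftc hd' (by fun_prop) 0 T]
  have h1 := mul_nonneg hx.1 (sq_nonneg (f x T))
  have h2 := mul_le_mul_of_nonneg_right hx.2 (sq_nonneg (f x 0))
  linarith

/-! ### Integrated energy identities -/

lemma I1 (hL : 0 < L) (hT : 0 < T) (hβ : 0 < β) (S : Sol L T α β u ux uxx uxxx uy uyy ut) :
    T * (∫ y in (0:ℝ)..L, ∫ x in (0:ℝ)..L, (u x y 0)^2)
      ≤ (∫ t in (0:ℝ)..T, ∫ y in (0:ℝ)..L, ∫ x in (0:ℝ)..L, (u x y t)^2)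
      + T * ((∫ t in (0:ℝ)..T, ∫ y in (0:ℝ)..L, (ux 0 y t)^2)
      + 2 * β * (∫ t in (0:ℝ)..T, ∫ x in (0:ℝ)..L, (u x L t)^2)
      + ∫ t in (0:ℝ)..T, ∫ y in (0:ℝ)..L, (Wp L uy 0 y t)^2) := by
  have cu := S.cu
  have cux := S.cux
  have cuy := S.cuy
  have cut := S.cut
  have h1 : ∀ t, (T - t) * ∫ y in (0:ℝ)..L, ∫ x in (0:ℝ)..L, 2 * (u x y t * ut x y t)
      = ∫ y in (0:ℝ)..L, (T - t) * ∫ x in (0:ℝ)..L, 2 * (u x y t * ut x y t) :=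
    fun t => (int_cmul _ _ _ _).symm
  have h2 : ∫ t in (0:ℝ)..T, (T - t) * ∫ y in (0:ℝ)..L, ∫ x in (0:ℝ)..L, 2 * (u x y t * ut x y t)
      = -T * (∫ y in (0:ℝ)..L, ∫ x in (0:ℝ)..L, (u x y 0)^2)
        + ∫ t in (0:ℝ)..T, ∫ y in (0:ℝ)..L, ∫ x in (0:ℝ)..L, (u x y t)^2 := by
    simp_rw [h1]
    rw [fub _ (by fun_prop), fub (fun t y => ∫ x in (0:ℝ)..L, (u x y t)^2) (by fun_prop),
      ← int_cmul, ← int_add (by fun_prop) (by fun_prop)]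
    exact int_congr hL.le fun y _ => time_weight T (fun x t => u x y t) (fun x t => ut x y t)
      (by fun_prop) (by fun_prop) (fun x t => S.dt x y t)
  have h3 : ∫ t in (0:ℝ)..T, (-T) * ((∫ y in (0:ℝ)..L, (ux 0 y t)^2)
        + 2 * β * (∫ x in (0:ℝ)..L, (u x L t)^2)
        + ∫ y in (0:ℝ)..L, (Wp L uy 0 y t)^2)
      ≤ ∫ t in (0:ℝ)..T, (T - t) * ∫ y in (0:ℝ)..L, ∫ x in (0:ℝ)..L, 2 * (u x y t * ut x y t) := by
    refine int_mono (by fun_prop) (by fun_prop) hT.le fun t ht => ?_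
    have hs := (stat_two hL S ht).1
    have a1 : 0 ≤ ∫ y in (0:ℝ)..L, (ux 0 y t)^2 := int_nonneg hL.le fun _ _ => sq_nonneg _
    have a2 : 0 ≤ ∫ x in (0:ℝ)..L, (u x L t)^2 := int_nonneg hL.le fun _ _ => sq_nonneg _
    have a3 : 0 ≤ ∫ y in (0:ℝ)..L, (Wp L uy 0 y t)^2 := int_nonneg hL.le fun _ _ => sq_nonneg _
    set A := ∫ y in (0:ℝ)..L, (ux 0 y t)^2
    set B := ∫ x in (0:ℝ)..L, (u x L t)^2
    set V := ∫ y in (0:ℝ)..L, (Wp L uy 0 y t)^2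
    have e : ∫ y in (0:ℝ)..L, ∫ x in (0:ℝ)..L, 2 * (u x y t * ut x y t)
      = - ((1 - α^2) * A + 2 * β * B + V) := by linear_combination hs
    rw [e]
    have b2 : 0 ≤ 2 * β * B := by positivity
    have c1 : (1 - α^2) * A + 2 * β * B + V ≤ A + 2 * β * B + V := by nlinarith [sq_nonneg α]
    have c2 : 0 ≤ A + 2 * β * B + V := by positivity
    have c3 := mul_le_mul_of_nonneg_left c1 (sub_nonneg.2 ht.2)
    have c4 := mul_nonneg ht.1 c2
    linarith
  rw [int_cmul, int_add (by fun_prop) (by fun_prop), int_add (by fun_prop) (by fun_prop),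
    int_cmul] at h3
  linarith

lemma I2 (hL : 0 < L) (hT : 0 < T) (hα : |α| < 1) (hβ : 0 < β)
    (S : Sol L T α β u ux uxx uxxx uy uyy ut) :
    3 * (∫ t in (0:ℝ)..T, ∫ y in (0:ℝ)..L, ∫ x in (0:ℝ)..L, (ux x y t)^2)
      + (∫ t in (0:ℝ)..T, ∫ y in (0:ℝ)..L, ∫ x in (0:ℝ)..L, (Wp L uy x y t)^2)
      ≤ L * (∫ y in (0:ℝ)..L, ∫ x in (0:ℝ)..L, (u x y 0)^2)
      + (∫ t in (0:ℝ)..T, ∫ y in (0:ℝ)..L, ∫ x in (0:ℝ)..L, (u x y t)^2)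
      + L * (∫ t in (0:ℝ)..T, ∫ y in (0:ℝ)..L, (ux 0 y t)^2) := by
  have cu := S.cu
  have cux := S.cux
  have cuy := S.cuy
  have cut := S.cut
  have h2 : -L * (∫ y in (0:ℝ)..L, ∫ x in (0:ℝ)..L, (u x y 0)^2)
      ≤ ∫ t in (0:ℝ)..T, ∫ y in (0:ℝ)..L, ∫ x in (0:ℝ)..L, 2 * (x * u x y t * ut x y t) := by
    rw [fub (fun t y => ∫ x in (0:ℝ)..L, 2 * (x * u x y t * ut x y t)) (by fun_prop), ← int_cmul]
    exact int_mono (by fun_prop) (by fun_prop) hL.le fun y _ =>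
      time_x T hL (fun x t => u x y t) (fun x t => ut x y t)
      (by fun_prop) (by fun_prop) (fun x t => S.dt x y t)
  have h3 : ∫ t in (0:ℝ)..T, (3 * (∫ y in (0:ℝ)..L, ∫ x in (0:ℝ)..L, (ux x y t)^2)
      + (∫ y in (0:ℝ)..L, ∫ x in (0:ℝ)..L, (Wp L uy x y t)^2)
      + ∫ y in (0:ℝ)..L, ∫ x in (0:ℝ)..L, 2 * (x * u x y t * ut x y t))
      ≤ ∫ t in (0:ℝ)..T, ((∫ y in (0:ℝ)..L, ∫ x in (0:ℝ)..L, (u x y t)^2)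
        + L * ∫ y in (0:ℝ)..L, (ux 0 y t)^2) := by
    refine int_mono (by fun_prop) (by fun_prop) hT.le fun t ht => ?_
    have hs := (stat_two hL S ht).2
    have a1 : 0 ≤ ∫ y in (0:ℝ)..L, (ux 0 y t)^2 := int_nonneg hL.le fun _ _ => sq_nonneg _
    have a2 : 0 ≤ ∫ x in (0:ℝ)..L, x * (u x L t)^2 :=
      int_nonneg hL.le fun _ h => mul_nonneg h.1 (sq_nonneg _)
    have b2 : 0 ≤ 2 * β * ∫ x in (0:ℝ)..L, x * (u x L t)^2 := by positivity
    have h5 : α^2 ≤ 1 := by rw [sq_le_one_iff_abs_le_one]; exact hα.le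
    have b3 := mul_le_mul_of_nonneg_right h5 (mul_nonneg hL.le a1)
    linarith
  rw [int_add (by fun_prop) (by fun_prop), int_add (by fun_prop) (by fun_prop), int_cmul,
    int_add (by fun_prop) (by fun_prop), int_cmul] at h3
  linarith

/-! ### Single cosine modes -/

/-- The boundary term in the equation for a cosine mode. -/
def gam (L β k : ℝ) (u : ℝ → ℝ → ℝ → ℝ) (x t : ℝ) : ℝ :=
  β * Real.cos (k * L) * u x L t + k * Real.sin (k * L) * Wp L u x L t

@[fun_prop]
lemma gam_cont {X : Type*} [TopologicalSpace X] (L β k : ℝ) {f : ℝ → ℝ → ℝ → ℝ} (hf : C3 f)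
    {a c : X → ℝ} (ha : Continuous a) (hc : Continuous c) :
    Continuous fun z => gam L β k f (a z) (c z) := by
  unfold gam
  unfold C3 at hf
  fun_prop

lemma C3_Wp (L : ℝ) {f : ℝ → ℝ → ℝ → ℝ} (hf : C3 f) : C3 (Wp L f) := by
  unfold C3
  fun_prop

lemma mode_G (hL : 0 < L) (S : Sol L T α β u ux uxx uxxx uy uyy ut) (k : ℝ) {x t : ℝ}
    (hx : x ∈ Set.Icc 0 L) (ht : t ∈ Set.Icc 0 T) :
    Ck L k (Wp L uyy) x t = gam L β k u x t - k^2 * Ck L k (Wp L u) x t := by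
  have cu := S.cu
  have cuy := S.cuy
  have cuyy := S.cuyy
  have hd : ∀ y, HasDerivAt (fun y => Wp L uy x y t * Real.cos (k * y)
      + k * (Wp L u x y t * Real.sin (k * y)))
      (Wp L uyy x y t * Real.cos (k * y) + k^2 * (Wp L u x y t * Real.cos (k * y))) y := by
    intro y
    have hc : HasDerivAt (fun y => Real.cos (k * y)) (-Real.sin (k * y) * k) y := by
      simpa using ((hasDerivAt_id y).const_mul k).cos
    have hs : HasDerivAt (fun y => Real.sin (k * y)) (Real.cos (k * y) * k) y := by
      simpa using ((hasDerivAt_id y).const_mul k).sin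
    refine (((Wp_dy cuy cuyy S.dyy x y t).mul hc).add
      (((Wp_dy cu cuy S.dy x y t).mul hs).const_mul k)).congr_deriv ?_
    ring
  have := ftc hd (by fun_prop) 0 L
  rw [int_add (by fun_prop) (by fun_prop), int_cmul, v_L hL S hx ht, v_0 S hx ht] at this
  simp only [mul_zero, Real.sin_zero] at this
  unfold Ck gam
  linear_combination this

lemma Ck_sq_le (hL : 0 < L) {f : ℝ → ℝ → ℝ → ℝ} (hf : C3 f) (k x t : ℝ) :
    (Ck L k f x t)^2 ≤ L * ∫ y in (0:ℝ)..L, (f x y t)^2 := by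
  unfold C3 at hf
  have h := cs (f := fun y => f x y t * Real.cos (k * y)) (by fun_prop) hL.le
  have h2 : ∫ y in (0:ℝ)..L, (f x y t * Real.cos (k * y))^2 ≤ ∫ y in (0:ℝ)..L, (f x y t)^2 := by
    refine int_mono (by fun_prop) (by fun_prop) hL.le fun y _ => ?_
    rw [mul_pow]
    nlinarith [Real.cos_sq_le_one (k * y), sq_nonneg (f x y t)]
  have h3 := mul_le_mul_of_nonneg_left h2 hL.le
  unfold Ck
  linarith

lemma mode_q (hL : 0 < L) (S : Sol L T α β u ux uxx uxxx uy uyy ut) (k t : ℝ) :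
    (Ck L k (Wp L u) 0 t)^2 ≤ 2 * L^3 * ((∫ x in (0:ℝ)..L, (u x L t)^2)
      + ∫ y in (0:ℝ)..L, (Wp L uy 0 y t)^2) := by
  have cu := S.cu
  have cuy := S.cuy
  have h1 := Ck_sq_le hL (C3_Wp L cu) k 0 t
  set b := ∫ x in (0:ℝ)..L, (u x L t)^2 with hb
  set v := ∫ y in (0:ℝ)..L, (Wp L uy 0 y t)^2 with hv
  have v0 : 0 ≤ v := int_nonneg hL.le fun _ _ => sq_nonneg _
  have h2 : ∫ y in (0:ℝ)..L, (Wp L u 0 y t)^2 ≤ ∫ y in (0:ℝ)..L, 2 * L * (b + v) := by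
    refine int_mono (by fun_prop) (by fun_prop) hL.le fun y hy => ?_
    have a1 := Wp_sq_le cu (x := 0) (L := L) ⟨le_rfl, hL.le⟩ L t
    have a2 := sq_diff_le (f := fun y => Wp L u 0 y t) (f' := fun y => Wp L uy 0 y t)
      (fun y => Wp_dy cu cuy S.dy 0 y t) (by fun_prop) hy.1 hy.2 le_rfl
    have a3 : (L - y) * v ≤ L * v := mul_le_mul_of_nonneg_right (by linarith [hy.1]) v0
    simp only [← hv] at a2
    nlinarith [sq_nonneg (2 * Wp L u 0 L t - Wp L u 0 y t)]
  rw [int_const'] at h2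
  have := mul_le_mul_of_nonneg_left h2 hL.le
  nlinarith

lemma mode_gam (hL : 0 < L) (S : Sol L T α β u ux uxx uxxx uy uyy ut) (k t : ℝ) :
    ∫ x in (0:ℝ)..L, (gam L β k u x t)^2
      ≤ (2 * β^2 + 2 * k^2 * L^2) * ∫ x in (0:ℝ)..L, (u x L t)^2 := by
  have cu := S.cu
  have h1 : ∫ x in (0:ℝ)..L, (gam L β k u x t)^2
      ≤ ∫ x in (0:ℝ)..L, (2 * β^2 * (u x L t)^2 + 2 * k^2 * (Wp L u x L t)^2) := by
    refine int_mono (by fun_prop) (by fun_prop) hL.le fun x hx => ?_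
    unfold gam
    have a1 : (β * Real.cos (k * L) * u x L t)^2 ≤ β^2 * (u x L t)^2 := by
      have := mul_le_mul_of_nonneg_right (Real.cos_sq_le_one (k * L)) (sq_nonneg (β * u x L t))
      nlinarith
    have a2 : (k * Real.sin (k * L) * Wp L u x L t)^2 ≤ k^2 * (Wp L u x L t)^2 := by
      have := mul_le_mul_of_nonneg_right (Real.sin_sq_le_one (k * L)) (sq_nonneg (k * Wp L u x L t))
      nlinarith
    nlinarith [sq_nonneg (β * Real.cos (k * L) * u x L t - k * Real.sin (k * L) * Wp L u x L t)]
  rw [int_add (by fun_prop) (by fun_prop), int_cmul, int_cmul] at h1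
  have h2 := Wp_int_le hL cu L t
  have h3 := mul_le_mul_of_nonneg_left h2 (by positivity : 0 ≤ 2 * k^2)
  linarith

/-- The constant in the estimate of one mode. -/
def Cmode (L β k : ℝ) : ℝ := 2 * L^2 + 2 * L^4 * k^2 + 4 * L^2 * (2 * β^2 + 2 * k^2 * L^2)

lemma Ck_zero {f : ℝ → ℝ → ℝ → ℝ} {k x t : ℝ} (hL : 0 < L)
    (h : ∀ y ∈ Set.Icc 0 L, f x y t = 0) : Ck L k f x t = 0 := by
  have : Ck L k f x t = ∫ y in (0:ℝ)..L, (0:ℝ) :=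
    int_congr hL.le fun y hy => by rw [h y hy, zero_mul]
  rw [this]; simp

lemma mode_pde (hL : 0 < L) (S : Sol L T α β u ux uxx uxxx uy uyy ut) (k : ℝ) {x t : ℝ}
    (hx : x ∈ Set.Icc 0 L) (ht : t ∈ Set.Icc 0 T) :
    Ck L k ut x t + Ck L k ux x t + Ck L k uxxx x t + Ck L k (Wp L uyy) x t = 0 := by
  have cux := S.cux
  have cuxxx := S.cuxxx
  have cuyy := S.cuyy
  have cut := S.cut
  unfold Ck
  rw [← int_add (by fun_prop) (by fun_prop), ← int_add (by fun_prop) (by fun_prop),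
    ← int_add (by fun_prop) (by fun_prop)]
  have : ∫ y in (0:ℝ)..L, (ut x y t * Real.cos (k * y) + ux x y t * Real.cos (k * y)
      + uxxx x y t * Real.cos (k * y) + Wp L uyy x y t * Real.cos (k * y))
      = ∫ y in (0:ℝ)..L, (0:ℝ) := by
    refine int_congr hL.le fun y hy => ?_
    linear_combination Real.cos (k * y) * S.pde x hx y hy t ht
  rw [this]; simp

/-- Energy identities for one mode at a fixed time. -/
lemma mode_stat (hL : 0 < L) (hα : |α| < 1) (S : Sol L T α β u ux uxx uxxx uy uyy ut) (k : ℝ) {t : ℝ}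
    (ht : t ∈ Set.Icc 0 T) :
    (-((Ck L k ux 0 t)^2 + k^2 * (Ck L k (Wp L u) 0 t)^2
        + 1 / (2 * L) * (∫ x in (0:ℝ)..L, (Ck L k u x t)^2)
        + 2 * L * ∫ x in (0:ℝ)..L, (gam L β k u x t)^2)
      ≤ ∫ x in (0:ℝ)..L, 2 * (Ck L k u x t * Ck L k ut x t)) ∧
    2 * k * (∫ x in (0:ℝ)..L, (Ck L k u x t)^2)
      + (∫ x in (0:ℝ)..L, 2 * (x * Ck L k u x t * Ck L k ut x t))
      ≤ 3 / 2 * (∫ x in (0:ℝ)..L, (Ck L k u x t)^2) + L * (Ck L k ux 0 t)^2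
        + 2 * L^2 * ∫ x in (0:ℝ)..L, (gam L β k u x t)^2 := by
  have cu := S.cu
  have cux := S.cux
  have cuxx := S.cuxx
  have cuxxx := S.cuxxx
  have cuy := S.cuy
  have cuyy := S.cuyy
  have cut := S.cut
  have cw := C3_Wp L cu
  have b0 : Ck L k u 0 t = 0 := Ck_zero hL fun y hy => S.b0 y hy t ht
  have bL : Ck L k u L t = 0 := Ck_zero hL fun y hy => S.bL y hy t ht
  have bW : Ck L k (Wp L u) L t = 0 := Ck_zero hL fun y _ => Wp_L u y t
  have b1 : Ck L k ux L t = α * Ck L k ux 0 t := by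
    unfold Ck
    rw [← int_cmul]
    exact int_congr hL.le fun y hy => by rw [S.b1 y hy t ht]; ring
  obtain ⟨s1, s2⟩ := stat_one L α hL (fun x => Ck L k u x t) (fun x => Ck L k ux x t)
    (fun x => Ck L k uxx x t) (fun x => Ck L k uxxx x t) (fun x => Ck L k ut x t)
    (fun x => gam L β k u x t + (-k^2) * Ck L k (Wp L u) x t)
    (fun x => Ck_dx cu cux S.dx x t) (fun x => Ck_dx cux cuxx S.dxx x t)
    (fun x => Ck_dx cuxx cuxxx S.dxxx x t) (by fun_prop) (by fun_prop) (by fun_prop)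
    (fun x hx => by
      have h1 := mode_pde hL S k hx ht
      have h2 := mode_G hL S k hx ht
      linear_combination h1 - h2) b0 bL b1
  have dW : ∀ x, HasDerivAt (fun x => Ck L k (Wp L u) x t) (Ck L k u x t) x := fun x =>
    Ck_dx cw cu (fun x y t => Wp_dx cu x y t) x t
  obtain ⟨q1, q2⟩ := stat_sq L (fun x => Ck L k (Wp L u) x t) (fun x => Ck L k u x t) dW
    (by fun_prop) bW
  have i1 := stat_interp L k hL (fun x => Ck L k (Wp L u) x t) (fun x => Ck L k u x t)
    (fun x => Ck L k ux x t) dW (fun x => Ck_dx cu cux S.dx x t) (by fun_prop) b0 bL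
  have h5 : α^2 ≤ 1 := by rw [sq_le_one_iff_abs_le_one]; exact hα.le
  have e1 : ∫ x in (0:ℝ)..L, 2 * (Ck L k u x t * (gam L β k u x t + (-k^2) * Ck L k (Wp L u) x t))
      = (∫ x in (0:ℝ)..L, 2 * (Ck L k u x t * gam L β k u x t))
      + (-k^2) * ∫ x in (0:ℝ)..L, 2 * (Ck L k u x t * Ck L k (Wp L u) x t) := by
    rw [← int_cmul, ← int_add (by fun_prop) (by fun_prop)]
    exact int_congr hL.le fun x _ => by ring
  have e2 : ∫ x in (0:ℝ)..L, 2 * (x * Ck L k u x t * (gam L β k u x t + (-k^2) * Ck L k (Wp L u) x t))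
      = (∫ x in (0:ℝ)..L, 2 * (x * Ck L k u x t * gam L β k u x t))
      + (-k^2) * ∫ x in (0:ℝ)..L, 2 * (x * Ck L k u x t * Ck L k (Wp L u) x t) := by
    rw [← int_cmul, ← int_add (by fun_prop) (by fun_prop)]
    exact int_congr hL.le fun x _ => by ring
  have f1 : ∫ x in (0:ℝ)..L, 2 * (Ck L k u x t * gam L β k u x t)
      ≤ ∫ x in (0:ℝ)..L, (1 / (2 * L) * (Ck L k u x t)^2 + 2 * L * (gam L β k u x t)^2) := by
    refine int_mono (by fun_prop) (by fun_prop) hL.le fun x _ => ?_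
    have : 1 / (2 * L) * (Ck L k u x t)^2 + 2 * L * (gam L β k u x t)^2
      - 2 * (Ck L k u x t * gam L β k u x t)
      = 1 / (2 * L) * (Ck L k u x t - 2 * L * gam L β k u x t)^2 := by field_simp; ring
    have h6 : 0 ≤ 1 / (2 * L) * (Ck L k u x t - 2 * L * gam L β k u x t)^2 := by positivity
    linarith
  have f2 : ∫ x in (0:ℝ)..L, (-(1 / 2) * (Ck L k u x t)^2 + (-(2 * L^2)) * (gam L β k u x t)^2)
      ≤ ∫ x in (0:ℝ)..L, 2 * (x * Ck L k u x t * gam L β k u x t) := by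
    refine int_mono (by fun_prop) (by fun_prop) hL.le fun x hx => ?_
    have hx2 : x^2 ≤ L^2 := pow_le_pow_left₀ hx.1 hx.2 2
    have := mul_le_mul_of_nonneg_right hx2 (sq_nonneg (gam L β k u x t))
    nlinarith [sq_nonneg (Ck L k u x t + 2 * x * gam L β k u x t)]
  rw [int_add (by fun_prop) (by fun_prop), int_cmul (1 / (2 * L)), int_cmul (2 * L)] at f1
  rw [int_add (by fun_prop) (by fun_prop), int_cmul, int_cmul] at f2
  rw [e1, q1] at s1
  rw [e2, q2] at s2
  have n1 : 0 ≤ ∫ x in (0:ℝ)..L, (Ck L k ux x t)^2 := int_nonneg hL.le fun _ _ => sq_nonneg _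
  have n2 := mul_nonneg (sq_nonneg α) (sq_nonneg (Ck L k ux 0 t))
  have n3 := mul_le_mul_of_nonneg_right h5 (mul_nonneg hL.le (sq_nonneg (Ck L k ux 0 t)))
  constructor <;> linarith

lemma I4 (hL : 0 < L) (hT : 0 < T) (hα : |α| < 1)
    (S : Sol L T α β u ux uxx uxxx uy uyy ut) {k : ℝ} (hk : 3 / 2 + L / (2 * T) ≤ k) :
    ∫ t in (0:ℝ)..T, ∫ x in (0:ℝ)..L, (Ck L k u x t)^2
      ≤ Cmode L β k * ((∫ t in (0:ℝ)..T, ∫ y in (0:ℝ)..L, (ux 0 y t)^2)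
      + (∫ t in (0:ℝ)..T, ∫ x in (0:ℝ)..L, (u x L t)^2)
      + ∫ t in (0:ℝ)..T, ∫ y in (0:ℝ)..L, (Wp L uy 0 y t)^2) := by
  have cu := S.cu
  have cux := S.cux
  have cuy := S.cuy
  have cut := S.cut
  have cw := C3_Wp L cu
  have tw := time_weight (L := L) T (fun x t => Ck L k u x t) (fun x t => Ck L k ut x t)
    (by fun_prop) (by fun_prop) (fun x t => Ck_dt cu cut S.dt x t)
  have tx := time_x (L := L) T hL (fun x t => Ck L k u x t) (fun x t => Ck L k ut x t)
    (by fun_prop) (by fun_prop) (fun x t => Ck_dt cu cut S.dt x t)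
  have nY : 0 ≤ ∫ t in (0:ℝ)..T, ∫ x in (0:ℝ)..L, (Ck L k u x t)^2 :=
    int_nonneg hT.le fun _ _ => int_nonneg hL.le fun _ _ => sq_nonneg _
  have h1 : ∫ t in (0:ℝ)..T, (-T) * ((Ck L k ux 0 t)^2 + k^2 * (Ck L k (Wp L u) 0 t)^2
        + 1 / (2 * L) * (∫ x in (0:ℝ)..L, (Ck L k u x t)^2)
        + 2 * L * ∫ x in (0:ℝ)..L, (gam L β k u x t)^2)
      ≤ ∫ t in (0:ℝ)..T, (T - t) * ∫ x in (0:ℝ)..L, 2 * (Ck L k u x t * Ck L k ut x t) := by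
    refine int_mono (by fun_prop) (by fun_prop) hT.le fun t ht => ?_
    have hs := (mode_stat hL hα S k ht).1
    have n1 : 0 ≤ ∫ x in (0:ℝ)..L, (Ck L k u x t)^2 := int_nonneg hL.le fun _ _ => sq_nonneg _
    have n2 : 0 ≤ ∫ x in (0:ℝ)..L, (gam L β k u x t)^2 := int_nonneg hL.le fun _ _ => sq_nonneg _
    have n3 : 0 ≤ (Ck L k ux 0 t)^2 + k^2 * (Ck L k (Wp L u) 0 t)^2
        + 1 / (2 * L) * (∫ x in (0:ℝ)..L, (Ck L k u x t)^2)
        + 2 * L * ∫ x in (0:ℝ)..L, (gam L β k u x t)^2 := by positivity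
    have c3 := mul_le_mul_of_nonneg_left hs (sub_nonneg.2 ht.2)
    have c4 := mul_nonneg ht.1 n3
    linarith
  have h2 : ∫ t in (0:ℝ)..T, (2 * k * (∫ x in (0:ℝ)..L, (Ck L k u x t)^2)
      + (∫ x in (0:ℝ)..L, 2 * (x * Ck L k u x t * Ck L k ut x t)))
      ≤ ∫ t in (0:ℝ)..T, (3 / 2 * (∫ x in (0:ℝ)..L, (Ck L k u x t)^2) + L * (Ck L k ux 0 t)^2
        + 2 * L^2 * ∫ x in (0:ℝ)..L, (gam L β k u x t)^2) :=
    int_mono (by fun_prop) (by fun_prop) hT.le fun t ht => (mode_stat hL hα S k ht).2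
  have h3 : ∫ t in (0:ℝ)..T, (Ck L k ux 0 t)^2
      ≤ ∫ t in (0:ℝ)..T, L * ∫ y in (0:ℝ)..L, (ux 0 y t)^2 :=
    int_mono (by fun_prop) (by fun_prop) hT.le fun t _ => Ck_sq_le hL cux k 0 t
  have h4 : ∫ t in (0:ℝ)..T, (Ck L k (Wp L u) 0 t)^2
      ≤ ∫ t in (0:ℝ)..T, 2 * L^3 * ((∫ x in (0:ℝ)..L, (u x L t)^2)
      + ∫ y in (0:ℝ)..L, (Wp L uy 0 y t)^2) :=
    int_mono (by fun_prop) (by fun_prop) hT.le fun t _ => mode_q hL S k t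
  have h5 : ∫ t in (0:ℝ)..T, ∫ x in (0:ℝ)..L, (gam L β k u x t)^2
      ≤ ∫ t in (0:ℝ)..T, (2 * β^2 + 2 * k^2 * L^2) * ∫ x in (0:ℝ)..L, (u x L t)^2 :=
    int_mono (by fun_prop) (by fun_prop) hT.le fun t _ => mode_gam hL S k t
  rw [int_cmul, int_add (by fun_prop) (by fun_prop), int_add (by fun_prop) (by fun_prop),
    int_add (by fun_prop) (by fun_prop), int_cmul, int_cmul, int_cmul, tw] at h1
  rw [int_add (by fun_prop) (by fun_prop), int_add (by fun_prop) (by fun_prop),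
    int_add (by fun_prop) (by fun_prop), int_cmul, int_cmul, int_cmul, int_cmul] at h2
  rw [int_cmul] at h3 h5
  rw [int_cmul, int_add (by fun_prop) (by fun_prop)] at h4
  have nP : 0 ≤ ∫ t in (0:ℝ)..T, ∫ y in (0:ℝ)..L, (ux 0 y t)^2 :=
    int_nonneg hT.le fun _ _ => int_nonneg hL.le fun _ _ => sq_nonneg _
  have nB : 0 ≤ ∫ t in (0:ℝ)..T, ∫ x in (0:ℝ)..L, (u x L t)^2 :=
    int_nonneg hT.le fun _ _ => int_nonneg hL.le fun _ _ => sq_nonneg _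
  have nV : 0 ≤ ∫ t in (0:ℝ)..T, ∫ y in (0:ℝ)..L, (Wp L uy 0 y t)^2 :=
    int_nonneg hT.le fun _ _ => int_nonneg hL.le fun _ _ => sq_nonneg _
  set Y := ∫ t in (0:ℝ)..T, ∫ x in (0:ℝ)..L, (Ck L k u x t)^2
  set P := ∫ t in (0:ℝ)..T, ∫ y in (0:ℝ)..L, (ux 0 y t)^2
  set B := ∫ t in (0:ℝ)..T, ∫ x in (0:ℝ)..L, (u x L t)^2
  set V := ∫ t in (0:ℝ)..T, ∫ y in (0:ℝ)..L, (Wp L uy 0 y t)^2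
  set Pk := ∫ t in (0:ℝ)..T, (Ck L k ux 0 t)^2
  set Q := ∫ t in (0:ℝ)..T, (Ck L k (Wp L u) 0 t)^2
  set G := ∫ t in (0:ℝ)..T, ∫ x in (0:ℝ)..L, (gam L β k u x t)^2
  set N := ∫ x in (0:ℝ)..L, (Ck L k u x 0)^2
  set Z := ∫ t in (0:ℝ)..T, ∫ x in (0:ℝ)..L, 2 * (x * Ck L k u x t * Ck L k ut x t)
  have j1 : L * N ≤ L / T * Y + L * Pk + L * k^2 * Q + Y / 2 + 2 * L^2 * G := by
    have hm := mul_le_mul_of_nonneg_left h1 (by positivity : 0 ≤ L / T)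
    have r1 : L / T * (-T * (Pk + k^2 * Q + 1 / (2 * L) * Y + 2 * L * G))
        = -(L * Pk + L * k^2 * Q + Y / 2 + 2 * L^2 * G) := by field_simp
    have r2 : L / T * (-T * N + Y) = - (L * N) + L / T * Y := by field_simp
    linarith
  have j2 : (2 * k - 2 - L / T) * Y ≤ 2 * L * Pk + L * k^2 * Q + 4 * L^2 * G := by linarith
  have j3 : Y ≤ (2 * k - 2 - L / T) * Y := by
    have : 1 ≤ 2 * k - 2 - L / T := by
      have : L / (2 * T) = (L / T) / 2 := by field_simp
      linarith
    nlinarith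
  have j4 := mul_le_mul_of_nonneg_left h3 (by positivity : 0 ≤ 2 * L)
  have j5 := mul_le_mul_of_nonneg_left h4 (by positivity : 0 ≤ L * k^2)
  have j6 := mul_le_mul_of_nonneg_left h5 (by positivity : 0 ≤ 4 * L^2)
  have k1 : 0 ≤ 2 * L^2 * (B + V) := by positivity
  have k2 : 0 ≤ 2 * L^4 * k^2 * P := by positivity
  have k3 : 0 ≤ 4 * L^2 * (2 * β^2 + 2 * k^2 * L^2) * (P + V) := by positivity
  unfold Cmode
  linarith

/-! ### Reduction to finitely many modes -/

lemma I3_pt (hL : 0 < L) (S : Sol L T α β u ux uxx uxxx uy uyy ut)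
    {ε η C : ℝ} (hη : 0 < η) (K : Finset ℝ) {y t : ℝ}
    (hy : y ∈ Set.Icc 0 L) (ht : t ∈ Set.Icc 0 T) (c : ℝ → ℝ) (hc : ∀ k, (c k)^2 ≤ C)
    (h : ∀ f f' : ℝ → ℝ, (∀ x, HasDerivAt f (f' x) x) → Continuous f' →
      (f y - ∑ k ∈ K, c k * ∫ s in (0:ℝ)..L, f s * Real.cos (k * s))^2
        ≤ ε * ((∫ s in (0:ℝ)..L, (f s)^2) + ∫ s in (0:ℝ)..L, (f' s)^2)) :
    ∫ x in (0:ℝ)..L, (u x y t)^2 ≤ 2 * η * (∫ x in (0:ℝ)..L, (ux x y t)^2)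
      + 1 / (2 * η) * (ε * ((∫ x in (0:ℝ)..L, ∫ z in (0:ℝ)..L, (Wp L u x z t)^2)
        + ∫ x in (0:ℝ)..L, ∫ z in (0:ℝ)..L, (Wp L uy x z t)^2))
      + (K.card : ℝ) * C * ∑ k ∈ K, ∫ x in (0:ℝ)..L, (Ck L k u x t)^2 := by
  have cu := S.cu
  have cux := S.cux
  have cuy := S.cuy
  have cw := C3_Wp L cu
  have cS : ∀ f : ℝ → ℝ → ℝ → ℝ, C3 f → Continuous fun x => ∑ k ∈ K, c k * Ck L k f x t := by
    intro f hf
    exact continuous_finsetSum _ fun k _ => by fun_prop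
  have cr := cS u cu
  have cg := cS _ cw
  have s1 := stat_rem L η hL hη (fun x => Wp L u x y t - ∑ k ∈ K, c k * Ck L k (Wp L u) x t)
    (fun x => u x y t) (fun x => ux x y t) (fun x => ∑ k ∈ K, c k * Ck L k u x t)
    (fun x => (Wp_dx cu x y t).sub (HasDerivAt.fun_sum fun k _ =>
      (Ck_dx cw cu (fun x y t => Wp_dx cu x y t) x t).const_mul (c k)))
    (fun x => S.dx x y t) (by fun_prop) cr (S.b0 y hy t ht) (S.bL y hy t ht)
  have s2 : ∫ x in (0:ℝ)..L, (Wp L u x y t - ∑ k ∈ K, c k * Ck L k (Wp L u) x t)^2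
      ≤ ∫ x in (0:ℝ)..L, ε * ((∫ z in (0:ℝ)..L, (Wp L u x z t)^2)
        + ∫ z in (0:ℝ)..L, (Wp L uy x z t)^2) := by
    refine int_mono (by fun_prop) (by fun_prop) hL.le fun x _ => ?_
    exact h (fun z => Wp L u x z t) (fun z => Wp L uy x z t)
      (fun z => Wp_dy cu cuy S.dy x z t) (by fun_prop)
  have s3 : ∫ x in (0:ℝ)..L, (∑ k ∈ K, c k * Ck L k u x t)^2
      ≤ ∫ x in (0:ℝ)..L, (K.card : ℝ) * C * ∑ k ∈ K, (Ck L k u x t)^2 := by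
    have cq : Continuous fun x => ∑ k ∈ K, (Ck L k u x t)^2 :=
      continuous_finsetSum _ fun k _ => by fun_prop
    refine int_mono (by fun_prop) (by fun_prop) hL.le fun x _ => ?_
    refine (sq_sum_le_card_mul_sum_sq).trans ?_
    rw [mul_assoc]
    refine mul_le_mul_of_nonneg_left ?_ (Nat.cast_nonneg _)
    rw [Finset.mul_sum]
    refine Finset.sum_le_sum fun k _ => ?_
    rw [mul_pow]
    exact mul_le_mul_of_nonneg_right (hc k) (sq_nonneg _)
  rw [int_cmul, int_add (by fun_prop) (by fun_prop)] at s2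
  rw [int_cmul, intervalIntegral.integral_finsetSum fun k _ => ii (by fun_prop) _ _] at s3
  have s4 := mul_le_mul_of_nonneg_left s2 (by positivity : 0 ≤ 1 / (2 * η))
  linarith

lemma I3 (hL : 0 < L) (hT : 0 < T) (S : Sol L T α β u ux uxx uxxx uy uyy ut)
    {ε η C : ℝ} (hε : 0 < ε) (hη : 0 < η) (K : Finset ℝ)
    (h : ∀ y ∈ Set.Icc 0 L, ∃ c : ℝ → ℝ, (∀ k, (c k)^2 ≤ C) ∧
      ∀ f f' : ℝ → ℝ, (∀ x, HasDerivAt f (f' x) x) → Continuous f' →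
      (f y - ∑ k ∈ K, c k * ∫ s in (0:ℝ)..L, f s * Real.cos (k * s))^2
        ≤ ε * ((∫ s in (0:ℝ)..L, (f s)^2) + ∫ s in (0:ℝ)..L, (f' s)^2)) :
    ∫ t in (0:ℝ)..T, ∫ y in (0:ℝ)..L, ∫ x in (0:ℝ)..L, (u x y t)^2
      ≤ 2 * η * (∫ t in (0:ℝ)..T, ∫ y in (0:ℝ)..L, ∫ x in (0:ℝ)..L, (ux x y t)^2)
      + L * (1 / (2 * η) * (ε *
        (L^2 * (∫ t in (0:ℝ)..T, ∫ y in (0:ℝ)..L, ∫ x in (0:ℝ)..L, (u x y t)^2)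
        + ∫ t in (0:ℝ)..T, ∫ y in (0:ℝ)..L, ∫ x in (0:ℝ)..L, (Wp L uy x y t)^2)))
      + L * ((K.card : ℝ) * C * ∑ k ∈ K, ∫ t in (0:ℝ)..T, ∫ x in (0:ℝ)..L, (Ck L k u x t)^2) := by
  have cu := S.cu
  have cux := S.cux
  have cuy := S.cuy
  have cq : Continuous fun t => ∑ k ∈ K, ∫ x in (0:ℝ)..L, (Ck L k u x t)^2 :=
      continuous_finsetSum _ fun k _ => by fun_prop
  have key : ∫ t in (0:ℝ)..T, ∫ y in (0:ℝ)..L, ∫ x in (0:ℝ)..L, (u x y t)^2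
      ≤ ∫ t in (0:ℝ)..T, (2 * η * (∫ y in (0:ℝ)..L, ∫ x in (0:ℝ)..L, (ux x y t)^2)
      + L * (1 / (2 * η) * (ε *
        (L^2 * (∫ y in (0:ℝ)..L, ∫ x in (0:ℝ)..L, (u x y t)^2)
        + ∫ y in (0:ℝ)..L, ∫ x in (0:ℝ)..L, (Wp L uy x y t)^2)))
      + L * ((K.card : ℝ) * C * ∑ k ∈ K, ∫ x in (0:ℝ)..L, (Ck L k u x t)^2)) := by
    refine int_mono (by fun_prop) (by fun_prop) hT.le fun t ht => ?_
    have e1 : ∫ x in (0:ℝ)..L, ∫ z in (0:ℝ)..L, (Wp L u x z t)^2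
        ≤ L^2 * ∫ y in (0:ℝ)..L, ∫ x in (0:ℝ)..L, (u x y t)^2 := by
      rw [fub (fun x z => (Wp L u x z t)^2) (by fun_prop), ← int_cmul]
      exact int_mono (by fun_prop) (by fun_prop) hL.le fun y _ => Wp_int_le hL cu y t
    have e2 : ∫ x in (0:ℝ)..L, ∫ z in (0:ℝ)..L, (Wp L uy x z t)^2
        = ∫ y in (0:ℝ)..L, ∫ x in (0:ℝ)..L, (Wp L uy x y t)^2 :=
      fub (fun x z => (Wp L uy x z t)^2) (by fun_prop) _ _ _ _
    have e3 : ∫ y in (0:ℝ)..L, ∫ x in (0:ℝ)..L, (u x y t)^2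
        ≤ ∫ y in (0:ℝ)..L, (2 * η * (∫ x in (0:ℝ)..L, (ux x y t)^2)
      + (1 / (2 * η) * (ε * ((∫ x in (0:ℝ)..L, ∫ z in (0:ℝ)..L, (Wp L u x z t)^2)
        + ∫ x in (0:ℝ)..L, ∫ z in (0:ℝ)..L, (Wp L uy x z t)^2))
      + (K.card : ℝ) * C * ∑ k ∈ K, ∫ x in (0:ℝ)..L, (Ck L k u x t)^2)) := by
      refine int_mono (by fun_prop) (by fun_prop) hL.le fun y hy => ?_
      obtain ⟨c, hc, hf⟩ := h y hy
      have := I3_pt hL S hη K hy ht c hc hf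
      linarith
    rw [int_add (by fun_prop) (by fun_prop), int_cmul, int_const', e2] at e3
    have e4 := mul_le_mul_of_nonneg_left e1 (by positivity : 0 ≤ L * (1 / (2 * η) * ε))
    linarith
  refine key.trans (le_of_eq ?_)
  rw [int_add (by fun_prop) (by fun_prop), int_add (by fun_prop) (by fun_prop), int_cmul, int_cmul,
    int_cmul, int_cmul, int_add (by fun_prop) (by fun_prop), int_cmul, int_cmul, int_cmul,
    intervalIntegral.integral_finsetSum fun k _ => ii (by fun_prop) _ _]

lemma obs (L T α β : ℝ) (hL : 0 < L) (hT : 0 < T) (hα : |α| < 1) (hβ : 0 < β) :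
    ∃ C > (0:ℝ), ∀ u ux uxx uxxx uy uyy ut : ℝ → ℝ → ℝ → ℝ,
      Sol L T α β u ux uxx uxxx uy uyy ut →
      (∫ x in (0:ℝ)..L, ∫ y in (0:ℝ)..L, (u x y 0)^2)
        ≤ C * ((∫ t in (0:ℝ)..T, ∫ y in (0:ℝ)..L, (ux 0 y t)^2)
              + (∫ t in (0:ℝ)..T, ∫ x in (0:ℝ)..L, (u x L t)^2)
              + (∫ t in (0:ℝ)..T, ∫ y in (0:ℝ)..L, (Wp L uy 0 y t)^2)) := by
  obtain ⟨a, ha⟩ : ∃ a, a = L / T + 1 := ⟨_, rfl⟩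
  have a0 : 0 < a := by rw [ha]; positivity
  obtain ⟨η, hη⟩ : ∃ η, η = 1 / (8 * a) := ⟨_, rfl⟩
  have η0 : 0 < η := by rw [hη]; positivity
  obtain ⟨ε, hε⟩ : ∃ ε, ε = 2 * η / (4 * L * (L^2 + a)) := ⟨_, rfl⟩
  have ε0 : 0 < ε := by rw [hε]; positivity
  obtain ⟨K, hK, C, hC, h⟩ := eval_approx L (3 / 2 + L / (2 * T)) ε hL ε0
  have M0 : ∀ k, 0 ≤ Cmode L β k := fun k => by unfold Cmode; positivity
  obtain ⟨M, hM⟩ : ∃ M, M = L * ((K.card : ℝ) * C * ∑ k ∈ K, Cmode L β k) := ⟨_, rfl⟩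
  have nM : 0 ≤ M := by
    have : 0 ≤ ∑ k ∈ K, Cmode L β k := Finset.sum_nonneg fun k _ => M0 k
    rw [hM]; positivity
  obtain ⟨b, hb⟩ : ∃ b, b = L * (1 + 2 * β) + L := ⟨_, rfl⟩
  have b0 : 0 < b := by rw [hb]; positivity
  obtain ⟨D, hD⟩ : ∃ D, D = 2 * (2 * η * b + b / (4 * a) + M) := ⟨_, rfl⟩
  have D0 : 0 < D := by rw [hD]; positivity
  refine ⟨D / T + (1 + 2 * β), by positivity, ?_⟩
  intro u ux uxx uxxx uy uyy ut S
  have cu := S.cu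
  rw [fub (fun x y => (u x y 0)^2) (by fun_prop)]
  have i1 := I1 hL hT hβ S
  have i2 := I2 hL hT hα hβ S
  have i3 := I3 hL hT S ε0 η0 K h
  have i4 : ∑ k ∈ K, ∫ t in (0:ℝ)..T, ∫ x in (0:ℝ)..L, (Ck L k u x t)^2
      ≤ ∑ k ∈ K, Cmode L β k * ((∫ t in (0:ℝ)..T, ∫ y in (0:ℝ)..L, (ux 0 y t)^2)
      + (∫ t in (0:ℝ)..T, ∫ x in (0:ℝ)..L, (u x L t)^2)
      + ∫ t in (0:ℝ)..T, ∫ y in (0:ℝ)..L, (Wp L uy 0 y t)^2) :=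
    Finset.sum_le_sum fun k hk => I4 hL hT hα S (hK k hk)
  rw [← Finset.sum_mul] at i4
  have nP : 0 ≤ ∫ t in (0:ℝ)..T, ∫ y in (0:ℝ)..L, (ux 0 y t)^2 :=
    int_nonneg hT.le fun _ _ => int_nonneg hL.le fun _ _ => sq_nonneg _
  have nB : 0 ≤ ∫ t in (0:ℝ)..T, ∫ x in (0:ℝ)..L, (u x L t)^2 :=
    int_nonneg hT.le fun _ _ => int_nonneg hL.le fun _ _ => sq_nonneg _
  have nV : 0 ≤ ∫ t in (0:ℝ)..T, ∫ y in (0:ℝ)..L, (Wp L uy 0 y t)^2 :=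
    int_nonneg hT.le fun _ _ => int_nonneg hL.le fun _ _ => sq_nonneg _
  have nX : 0 ≤ ∫ t in (0:ℝ)..T, ∫ y in (0:ℝ)..L, ∫ x in (0:ℝ)..L, (u x y t)^2 :=
    int_nonneg hT.le fun _ _ => int_nonneg hL.le fun _ _ =>
      int_nonneg hL.le fun _ _ => sq_nonneg _
  have nU : 0 ≤ ∫ t in (0:ℝ)..T, ∫ y in (0:ℝ)..L, ∫ x in (0:ℝ)..L, (ux x y t)^2 :=
    int_nonneg hT.le fun _ _ => int_nonneg hL.le fun _ _ =>
      int_nonneg hL.le fun _ _ => sq_nonneg _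
  have nW : 0 ≤ ∫ t in (0:ℝ)..T, ∫ y in (0:ℝ)..L, ∫ x in (0:ℝ)..L, (Wp L uy x y t)^2 :=
    int_nonneg hT.le fun _ _ => int_nonneg hL.le fun _ _ =>
      int_nonneg hL.le fun _ _ => sq_nonneg _
  have i5 := mul_le_mul_of_nonneg_left i4 (by positivity : 0 ≤ L * ((K.card : ℝ) * C))
  generalize (∑ k ∈ K, ∫ t in (0:ℝ)..T, ∫ x in (0:ℝ)..L, (Ck L k u x t)^2) = Y at *
  generalize (∑ k ∈ K, Cmode L β k) = Q at *
  generalize (∫ t in (0:ℝ)..T, ∫ y in (0:ℝ)..L, (ux 0 y t)^2) = P at *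
  generalize (∫ t in (0:ℝ)..T, ∫ x in (0:ℝ)..L, (u x L t)^2) = B at *
  generalize (∫ t in (0:ℝ)..T, ∫ y in (0:ℝ)..L, (Wp L uy 0 y t)^2) = V at *
  generalize (∫ t in (0:ℝ)..T, ∫ y in (0:ℝ)..L, ∫ x in (0:ℝ)..L, (u x y t)^2) = X at *
  generalize (∫ t in (0:ℝ)..T, ∫ y in (0:ℝ)..L, ∫ x in (0:ℝ)..L, (ux x y t)^2) = U at *
  generalize (∫ t in (0:ℝ)..T, ∫ y in (0:ℝ)..L, ∫ x in (0:ℝ)..L, (Wp L uy x y t)^2) = W at *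
  generalize (∫ y in (0:ℝ)..L, ∫ x in (0:ℝ)..L, (u x y 0)^2) = N at *
  obtain ⟨O, hO⟩ : ∃ O, O = P + B + V := ⟨_, rfl⟩
  have nO : 0 ≤ O := by rw [hO]; positivity
  rw [← hO] at i5 ⊢
  have j1 : N ≤ X / T + (1 + 2 * β) * O := by
    have : N ≤ (X + T * (P + 2 * β * B + V)) / T := by
      rw [le_div_iff₀ hT]; linarith
    have e : (X + T * (P + 2 * β * B + V)) / T = X / T + (P + 2 * β * B + V) := by field_simp
    have e2 : P + 2 * β * B + V ≤ (1 + 2 * β) * O := by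
      rw [hO]; nlinarith [mul_nonneg hβ.le nP, mul_nonneg hβ.le nV]
    linarith
  have j2 : 3 * U + W ≤ a * X + b * O := by
    have e1 := mul_le_mul_of_nonneg_left j1 hL.le
    have e2 : L * (X / T + (1 + 2 * β) * O) = L / T * X + L * (1 + 2 * β) * O := by ring
    have e3 : L * P ≤ L * O := mul_le_mul_of_nonneg_left (by rw [hO]; linarith) hL.le
    rw [ha, hb]; linarith
  have j3 : U ≤ a * X + b * O := by linarith
  have j4 : W ≤ a * X + b * O := by linarith
  have j5 : 2 * η * U ≤ X / 4 + 2 * η * b * O := by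
    have := mul_le_mul_of_nonneg_left j3 (by positivity : 0 ≤ 2 * η)
    have e : 2 * η * (a * X) = X / 4 := by rw [hη]; field_simp; ring
    linarith
  have j6 : L * (1 / (2 * η) * (ε * (L^2 * X + W))) ≤ X / 4 + b / (4 * a) * O := by
    have e : L * (1 / (2 * η) * (ε * (L^2 * X + W))) = (L^2 * X + W) / (4 * (L^2 + a)) := by
      rw [hε]; field_simp
    rw [e, div_le_iff₀ (by positivity)]
    have e2 : (X / 4 + b / (4 * a) * O) * (4 * (L^2 + a))
      = L^2 * X + (a * X + b * O) + b * O * L^2 / a := by field_simp; ring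
    have e3 : 0 ≤ b * O * L^2 / a := by positivity
    linarith
  have j7 : L * (K.card * C * Y) ≤ M * O := by
    rw [hM]; linarith
  have j8 : X ≤ D * O := by
    rw [hD]; linarith
  have j9 : X / T ≤ D / T * O := by
    rw [div_mul_eq_mul_div]
    exact div_le_div_of_nonneg_right j8 hT.le
  linarith

end sol

/-! ### From classical solutions to the working structure -/

/-- Smoothness of a function of three variables. -/
abbrev CD (n : ℕ) (f : ℝ → ℝ → ℝ → ℝ) : Prop :=
  ContDiff ℝ n fun p : ℝ × ℝ × ℝ => f p.1 p.2.1 p.2.2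

lemma fd_smooth {n : ℕ} {f : ℝ → ℝ → ℝ → ℝ} (hf : CD (n + 1) f) (e : ℝ × ℝ × ℝ) :
    ContDiff ℝ n fun p : ℝ × ℝ × ℝ =>
      fderiv ℝ (fun p : ℝ × ℝ × ℝ => f p.1 p.2.1 p.2.2) p e := by
  have := hf.fderiv_right (m := (n : ℕ)) (by norm_cast)
  exact this.clm_apply contDiff_const

lemma fd_diff {n : ℕ} {f : ℝ → ℝ → ℝ → ℝ} (hf : CD (n + 1) f) (p : ℝ × ℝ × ℝ) :
    HasFDerivAt (fun p : ℝ × ℝ × ℝ => f p.1 p.2.1 p.2.2)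
      (fderiv ℝ (fun p : ℝ × ℝ × ℝ => f p.1 p.2.1 p.2.2) p) p :=
  (hf.differentiable (by norm_cast) p).hasFDerivAt

lemma pdx_prop {n : ℕ} {f : ℝ → ℝ → ℝ → ℝ} (hf : CD (n + 1) f) :
    CD n (pdx f) ∧ ∀ x y t, HasDerivAt (fun x => f x y t) (pdx f x y t) x := by
  have h : ∀ x y t, HasDerivAt (fun x => f x y t)
      (fderiv ℝ (fun p : ℝ × ℝ × ℝ => f p.1 p.2.1 p.2.2) (x, y, t) (1, 0, 0)) x := fun x y t =>
    HasFDerivAt.comp_hasDerivAt (l := fun p : ℝ × ℝ × ℝ => f p.1 p.2.1 p.2.2) x (fd_diff hf (x, y, t))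
      ((hasDerivAt_id x).prodMk ((hasDerivAt_const x y).prodMk (hasDerivAt_const x t)))
  have e : (fun p : ℝ × ℝ × ℝ => pdx f p.1 p.2.1 p.2.2) = fun p : ℝ × ℝ × ℝ =>
      fderiv ℝ (fun p : ℝ × ℝ × ℝ => f p.1 p.2.1 p.2.2) p (1, 0, 0) := by
    funext p
    exact (h p.1 p.2.1 p.2.2).deriv
  refine ⟨?_, fun x y t => (h x y t).differentiableAt.hasDerivAt⟩
  unfold CD
  rw [e]
  exact fd_smooth hf _

lemma pdy_prop {n : ℕ} {f : ℝ → ℝ → ℝ → ℝ} (hf : CD (n + 1) f) :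
    CD n (pdy f) ∧ ∀ x y t, HasDerivAt (fun y => f x y t) (pdy f x y t) y := by
  have h : ∀ x y t, HasDerivAt (fun y => f x y t)
      (fderiv ℝ (fun p : ℝ × ℝ × ℝ => f p.1 p.2.1 p.2.2) (x, y, t) (0, 1, 0)) y := fun x y t =>
    HasFDerivAt.comp_hasDerivAt (l := fun p : ℝ × ℝ × ℝ => f p.1 p.2.1 p.2.2) y (fd_diff hf (x, y, t))
      ((hasDerivAt_const y x).prodMk ((hasDerivAt_id y).prodMk (hasDerivAt_const y t)))
  have e : (fun p : ℝ × ℝ × ℝ => pdy f p.1 p.2.1 p.2.2) = fun p : ℝ × ℝ × ℝ =>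
      fderiv ℝ (fun p : ℝ × ℝ × ℝ => f p.1 p.2.1 p.2.2) p (0, 1, 0) := by
    funext p
    exact (h p.1 p.2.1 p.2.2).deriv
  refine ⟨?_, fun x y t => (h x y t).differentiableAt.hasDerivAt⟩
  unfold CD
  rw [e]
  exact fd_smooth hf _

lemma pdt_prop {n : ℕ} {f : ℝ → ℝ → ℝ → ℝ} (hf : CD (n + 1) f) :
    CD n (pdt f) ∧ ∀ x y t, HasDerivAt (fun t => f x y t) (pdt f x y t) t := by
  have h : ∀ x y t, HasDerivAt (fun t => f x y t)
      (fderiv ℝ (fun p : ℝ × ℝ × ℝ => f p.1 p.2.1 p.2.2) (x, y, t) (0, 0, 1)) t := fun x y t =>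
    HasFDerivAt.comp_hasDerivAt (l := fun p : ℝ × ℝ × ℝ => f p.1 p.2.1 p.2.2) t (fd_diff hf (x, y, t))
      ((hasDerivAt_const t x).prodMk ((hasDerivAt_const t y).prodMk (hasDerivAt_id t)))
  have e : (fun p : ℝ × ℝ × ℝ => pdt f p.1 p.2.1 p.2.2) = fun p : ℝ × ℝ × ℝ =>
      fderiv ℝ (fun p : ℝ × ℝ × ℝ => f p.1 p.2.1 p.2.2) p (0, 0, 1) := by
    funext p
    exact (h p.1 p.2.1 p.2.2).deriv
  refine ⟨?_, fun x y t => (h x y t).differentiableAt.hasDerivAt⟩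
  unfold CD
  rw [e]
  exact fd_smooth hf _

lemma pdx3_eq (u : ℝ → ℝ → ℝ → ℝ) : pdx3 u = pdx (pdx (pdx u)) := by
  funext x y t
  unfold pdx3 pdx
  simp only [iteratedDeriv_succ, iteratedDeriv_zero]

lemma pdy2_eq (u : ℝ → ℝ → ℝ → ℝ) : pdy2 u = pdy (pdy u) := by
  funext x y t
  unfold pdy2 pdy
  simp only [iteratedDeriv_succ, iteratedDeriv_zero]

lemma sol_of_kp {L T α β : ℝ} (hL : 0 < L) (hT : 0 < T) {u : ℝ → ℝ → ℝ → ℝ}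
    (h : IsKPSolution L T α β u) :
    Sol L T α β u (pdx u) (pdx (pdx u)) (pdx (pdx (pdx u))) (pdy u) (pdy (pdy u)) (pdt u) := by
  obtain ⟨h0, hp, hb, hc⟩ := h
  have h3 : CD (2 + 1) u := h0
  obtain ⟨c1, d1⟩ := pdx_prop h3
  obtain ⟨c2, d2⟩ := pdx_prop (n := 1) c1
  obtain ⟨c3, d3⟩ := pdx_prop (n := 0) c2
  obtain ⟨e1, f1⟩ := pdy_prop h3
  obtain ⟨e2, f2⟩ := pdy_prop (n := 1) e1
  obtain ⟨g1, k1⟩ := pdt_prop h3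
  rw [pdx3_eq, pdy2_eq] at hp
  have C1 : C3 (pdx u) := c1.continuous
  have C4 : C3 (pdx (pdx (pdx u))) := c3.continuous
  have C5 : C3 (pdy (pdy u)) := e2.continuous
  have C6 : C3 (pdt u) := g1.continuous
  refine ⟨h3.continuous, C1, c2.continuous, C4, e1.continuous, C5, C6, d1, d2, d3, f1, f2, k1,
    ?_, fun y hy t ht => (hb y hy t ht).1, fun y hy t ht => (hb y hy t ht).2.1,
    fun y hy t ht => (hb y hy t ht).2.2, fun x hx t ht => (hc x hx t ht).1,
    fun x hx t ht => (hc x hx t ht).2⟩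
  have hcl : IsClosed {p : ℝ × ℝ × ℝ | pdt u p.1 p.2.1 p.2.2 + pdx u p.1 p.2.1 p.2.2
      + pdx (pdx (pdx u)) p.1 p.2.1 p.2.2 + Wp L (pdy (pdy u)) p.1 p.2.1 p.2.2 = 0} :=
    isClosed_eq (by fun_prop) continuous_const
  have hsub : Set.Ioo (0:ℝ) L ×ˢ (Set.Ioo (0:ℝ) L ×ˢ Set.Ioo (0:ℝ) T) ⊆
      {p : ℝ × ℝ × ℝ | pdt u p.1 p.2.1 p.2.2 + pdx u p.1 p.2.1 p.2.2
      + pdx (pdx (pdx u)) p.1 p.2.1 p.2.2 + Wp L (pdy (pdy u)) p.1 p.2.1 p.2.2 = 0} :=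
    fun p hp' => hp p.1 hp'.1 p.2.1 hp'.2.1 p.2.2 hp'.2.2
  have hcl2 := closure_minimal hsub hcl
  rw [closure_prod_eq, closure_prod_eq, closure_Ioo hL.ne, closure_Ioo hT.ne] at hcl2
  intro x hx y hy t ht
  exact hcl2 (a := (x, y, t)) ⟨hx, hy, ht⟩

/-- Observability inequality: there exists `C > 0` such that every classical solution
of the closed-loop linear KP-II system satisfies
`∫_Ω u(·,·,0)² ≤ C [∫₀^T ∫₀^L u_x(0,y,t)² dy dt + ∫₀^T ∫₀^L u(x,L,t)² dx dt
  + ∫₀^T ∫₀^L ((∂ₓ⁻¹ u_y)(0,y,t))² dy dt]`. -/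
theorem kp_observability (L T α β : ℝ) (hL : 0 < L) (hT : 0 < T)
    (hα0 : 0 < |α|) (hα1 : |α| < 1) (hβ : 0 < β) :
    ∃ C > (0:ℝ), ∀ u : ℝ → ℝ → ℝ → ℝ, IsKPSolution L T α β u →
      (∫ x in (0:ℝ)..L, ∫ y in (0:ℝ)..L, (u x y 0)^2)
        ≤ C * ((∫ t in (0:ℝ)..T, ∫ y in (0:ℝ)..L, (pdx u 0 y t)^2)
              + (∫ t in (0:ℝ)..T, ∫ x in (0:ℝ)..L, (u x L t)^2)
              + (∫ t in (0:ℝ)..T, ∫ y in (0:ℝ)..L,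
                  (pxInv L (fun s y' => pdy u s y' t) 0 y)^2)) := by
  obtain ⟨C, hC, h⟩ := obs L T α β hL hT hα1 hβ
  exact ⟨C, hC, fun u hu => h _ _ _ _ _ _ _ (sol_of_kp hL hT hu)⟩

end
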